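/- arXiv:2105.14119 — 7 statements merged into one kernel-verified Lean document; each statement's English description precedes it below -/
import Mathlib

section
/- Let z, x ∈ X^n, let V be a nonempty class of functions X → Y with f ∈ V, and let h : X → Y. Then for every abstention set A* ⊆ {1,…,n} minimizing A ↦ L_x(V, h, A) over all subsets A ⊆ {1,…,n}, one has ℓ_x(f, h, A*) ≤ (c/n)·|{i : x_i ≠ z_i}| + L_z(V, h). -/
open Finset

/-- Selective test loss with abstention set `A`:
`ℓ_x(f,h,A) = (c/n)·|A| + (1/n)·Σ_{i∉A} ℓ(f(x_i), h(x_i))`. -/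
noncomputable def selLoss {X Y : Type*} (ℓ : Y → Y → ℝ) (c : ℝ) {n : ℕ}
    (x : Fin n → X) (f h : X → Y) (A : Finset (Fin n)) : ℝ :=
  c / (n : ℝ) * (A.card : ℝ) + (1 / (n : ℝ)) * ∑ i ∈ Aᶜ, ℓ (f (x i)) (h (x i))

/-- `L_x(V,h,A) = sup_{g ∈ V} ℓ_x(g,h,A)`. -/
noncomputable def worstSelLoss {X Y : Type*} (ℓ : Y → Y → ℝ) (c : ℝ) {n : ℕ}
    (x : Fin n → X) (V : Set (X → Y)) (h : X → Y) (A : Finset (Fin n)) : ℝ :=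
  ⨆ g ∈ V, selLoss ℓ c x g h A

/-- `L_z(V,h) = sup_{g ∈ V} (1/n)·Σ_i ℓ(g(z_i), h(z_i))`. -/
noncomputable def worstLoss {X Y : Type*} (ℓ : Y → Y → ℝ) {n : ℕ}
    (z : Fin n → X) (V : Set (X → Y)) (h : X → Y) : ℝ :=
  ⨆ g ∈ V, (1 / (n : ℝ)) * ∑ i, ℓ (g (z i)) (h (z i))

/-!
Abstaining exactly where `x` and `z` disagree makes the selective losses on `x` and on `z` equal,
and on `z` abstention raises the worst-case loss by at most its cost. The minimizer does at least
as well as this choice.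
-/

section SelectiveLoss

variable {X Y : Type*} {ℓ : Y → Y → ℝ} {c B : ℝ} {n : ℕ} {x z : Fin n → X} {V : Set (X → Y)}
  {g h : X → Y} {A : Finset (Fin n)}

theorem selLoss_empty : selLoss ℓ c x g h ∅ = 1 / (n : ℝ) * ∑ i, ℓ (g (x i)) (h (x i)) := by
  simp [selLoss]

theorem worstSelLoss_empty : worstSelLoss ℓ c x V h ∅ = worstLoss ℓ x V h := by
  simp only [worstSelLoss, worstLoss, selLoss_empty]

theorem selLoss_congr (hxz : ∀ i ∉ A, x i = z i) :
    selLoss ℓ c x g h A = selLoss ℓ c z g h A := by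
  have hsum : ∑ i ∈ Aᶜ, ℓ (g (x i)) (h (x i)) = ∑ i ∈ Aᶜ, ℓ (g (z i)) (h (z i)) :=
    sum_congr rfl fun i hi => by rw [hxz i (mem_compl.mp hi)]
  rw [selLoss, selLoss, hsum]

theorem worstSelLoss_congr (hxz : ∀ i ∉ A, x i = z i) :
    worstSelLoss ℓ c x V h A = worstSelLoss ℓ c z V h A := by
  simp only [worstSelLoss, selLoss_congr hxz]

theorem selLoss_le_add_selLoss_empty (hℓ : ∀ y y', 0 ≤ ℓ y y') :
    selLoss ℓ c x g h A ≤ c / n * A.card + selLoss ℓ c x g h ∅ := by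
  rw [selLoss_empty, selLoss]
  gcongr
  · exact fun _ _ _ => hℓ _ _
  · exact subset_univ _

theorem worstLoss_nonneg (hℓ : ∀ y y', 0 ≤ ℓ y y') : 0 ≤ worstLoss ℓ x V h :=
  Real.iSup_nonneg fun _ => Real.iSup_nonneg fun _ =>
    mul_nonneg (by positivity) (sum_nonneg fun _ _ => hℓ _ _)

theorem selLoss_le_of_loss_le (hℓ : ∀ y y', ℓ y y' ≤ B) :
    selLoss ℓ c x g h A ≤ c / n * A.card + 1 / n * (Aᶜ.card • B) := by
  unfold selLoss
  gcongr
  exact sum_le_card_nsmul _ _ _ fun _ _ => hℓ _ _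

theorem selLoss_le_worstSelLoss (hℓ : ∀ y y', ℓ y y' ≤ B) (hg : g ∈ V) :
    selLoss ℓ c x g h A ≤ worstSelLoss ℓ c x V h A := by
  refine le_ciSup₂ (f := fun g' (_ : g' ∈ V) => selLoss ℓ c x g' h A)
    ⟨c / n * A.card + 1 / n * (Aᶜ.card • B), ?_⟩ g hg
  simp only [mem_upperBounds, Set.mem_iUnion, Set.mem_range]
  rintro _ ⟨g', -, rfl⟩
  exact selLoss_le_of_loss_le hℓ

theorem worstSelLoss_le_add_worstLoss (hc : 0 ≤ c) (hℓ : ∀ y y', ℓ y y' ∈ Set.Icc 0 B) :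
    worstSelLoss ℓ c x V h A ≤ c / n * A.card + worstLoss ℓ x V h := by
  -- For `g ∉ V` the inner supremum is over an empty type, hence `0` in `ℝ`.
  have hnonneg : 0 ≤ c / n * A.card + worstLoss ℓ x V h :=
    add_nonneg (by positivity) (worstLoss_nonneg fun y y' => (hℓ y y').1)
  refine Real.iSup_le (fun g => Real.iSup_le (fun hg => ?_) hnonneg) hnonneg
  calc selLoss ℓ c x g h A
      ≤ c / n * A.card + selLoss ℓ c x g h ∅ :=
        selLoss_le_add_selLoss_empty fun y y' => (hℓ y y').1
    _ ≤ c / n * A.card + worstSelLoss ℓ c x V h ∅ := by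
        gcongr
        exact selLoss_le_worstSelLoss (fun y y' => (hℓ y y').2) hg
    _ = c / n * A.card + worstLoss ℓ x V h := by rw [worstSelLoss_empty]

end SelectiveLoss

theorem stmt_0_general {X Y : Type*} [DecidableEq X] {ℓ : Y → Y → ℝ} {B : ℝ}
    (hℓ : ∀ y y', ℓ y y' ∈ Set.Icc 0 B) {c : ℝ} (hc : 0 ≤ c) {n : ℕ} (_hn : 0 < n)
    {z x : Fin n → X} {V : Set (X → Y)} {f : X → Y} (hf : f ∈ V) {h : X → Y}
    {A : Finset (Fin n)}
    (hA : worstSelLoss ℓ c x V h A ≤ worstSelLoss ℓ c x V h {i | x i ≠ z i}) :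
    selLoss ℓ c x f h A ≤ c / n * #{i | x i ≠ z i} + worstLoss ℓ z V h := by
  have hagree : ∀ i ∉ ({i | x i ≠ z i} : Finset (Fin n)), x i = z i := by simp
  calc selLoss ℓ c x f h A
      ≤ worstSelLoss ℓ c x V h A := selLoss_le_worstSelLoss (fun y y' => (hℓ y y').2) hf
    _ ≤ worstSelLoss ℓ c x V h {i | x i ≠ z i} := hA
    _ = worstSelLoss ℓ c z V h {i | x i ≠ z i} := worstSelLoss_congr hagree
    _ ≤ c / n * #{i | x i ≠ z i} + worstLoss ℓ z V h := worstSelLoss_le_add_worstLoss hc hℓ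

theorem stmt_0 {X Y : Type*} [Countable X] [DecidableEq X]
    (ℓ : Y → Y → ℝ) (hℓ : ∀ y y', ℓ y y' ∈ Set.Icc (0 : ℝ) 1)
    (c : ℝ) (hc : c ∈ Set.Ioc (0 : ℝ) 1) {n : ℕ} (hn : 0 < n)
    (z x : Fin n → X) (V : Set (X → Y)) (hV : V.Nonempty)
    (f : X → Y) (hf : f ∈ V) (h : X → Y)
    (Astar : Finset (Fin n))
    (hmin : ∀ A : Finset (Fin n),
      worstSelLoss ℓ c x V h Astar ≤ worstSelLoss ℓ c x V h A) :
    selLoss ℓ c x f h Astar ≤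
      c / (n : ℝ) * ((univ.filter fun i => x i ≠ z i).card : ℝ) + worstLoss ℓ z V h := by
  exact stmt_0_general hℓ hc.1.le hn hf (hmin _)
end

section
/- Let P and Q be probability distributions on the countable set X, let V be a nonempty class of functions X → Y with f ∈ V, and let h : X → Y. Then for every real k ≥ 1: E_{x ~ Q^n}[ min_{A ⊆ {1,…,n}} L_x(V, h, A) ] ≤ c·D_k(P‖Q) + k·E_{z ~ P^n}[ L_z(V, h) ]. In particular, E_{x ~ Q^n}[ ℓ_x(f, h, A*) ] ≤ min_{k ≥ 1} ( c·D_k(P‖Q) + k·E_{z ~ P^n}[ L_z(V, h) ] ), where for each x the bound holds simultaneously for every minimizer A* of A ↦ L_x(V, h, A) over subsets of {1,…,n}. -/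
open Finset MeasureTheory

/-- The divergence `D_k(P‖Q) = Σ_x max(Q(x) − k·P(x), 0)`. -/
noncomputable def Dk {X : Type*} (P Q : PMF X) (k : ℝ) : ℝ :=
  ∑' a : X, max ((Q a).toReal - k * (P a).toReal) 0

/-!
Split `Q = κ + δ` with `κ ≤ k • P` and `δ(X) = D_k(P‖Q)`, call a point drawn from `κ` marked, and
abstain exactly on the unmarked points of the sample; this costs `c · D_k(P‖Q)` on average.
On the marked points, let a Markov kernel `K` keep the point with probability `1 / k` and otherwise
redraw it, as it does for every unmarked point, from the normalized residual `P - κ / k`. The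
outcome has law `P`, and since the losses are nonnegative, the loss of each `g` on the marked points
is at most `k` times its conditional expected loss on the resampled points. A supremum of
expectations is at most the expectation of the supremum, so the same bound holds for the worst case
over `V`, and averaging over the marked sample gives `k · E_{z ~ P^n} L_z(V, h)`.
-/

open ProbabilityTheory
open scoped NNReal ENNReal

section TruncatedDifference

variable {X : Type*} [MeasurableSpace X]

lemma measure_le_add_sub (μ ν : Measure X) [IsFiniteMeasure μ] [IsFiniteMeasure ν] :
    μ ≤ ν + (μ - ν) := by
  obtain ⟨s, hs⟩ := exists_isHahnDecomposition μ ν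
  have on_compl : (μ - ν).restrict sᶜ + ν.restrict sᶜ = μ.restrict sᶜ := by
    rw [Measure.restrict_sub_eq_restrict_sub_restrict hs.measurableSet.compl,
      Measure.sub_add_cancel_of_le hs.ge_on_compl]
  calc μ = μ.restrict s + μ.restrict sᶜ :=
        (Measure.restrict_add_restrict_compl hs.measurableSet).symm
    _ ≤ ν.restrict s + (ν.restrict sᶜ + (μ - ν).restrict sᶜ) := by
      rw [add_comm (ν.restrict sᶜ), on_compl]
      exact add_le_add_left hs.le_on _
    _ = ν + (μ - ν).restrict sᶜ := by
      rw [← add_assoc, Measure.restrict_add_restrict_compl hs.measurableSet]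
    _ ≤ ν + (μ - ν) := by
      gcongr
      exact Measure.restrict_le_self

lemma exists_le_add_measure_sub_eq (μ ν : Measure X) [IsFiniteMeasure μ] [IsFiniteMeasure ν] :
    ∃ κ ≤ ν, κ + (μ - ν) = μ :=
  ⟨μ - (μ - ν), (Measure.sub_le_iff_le_add_of_le Measure.sub_le).2 (measure_le_add_sub μ ν),
    Measure.sub_add_cancel_of_le Measure.sub_le⟩

lemma measure_sub_singleton [MeasurableSingletonClass X] (μ ν : Measure X) [IsFiniteMeasure ν]
    (x : X) : (μ - ν) {x} = μ {x} - ν {x} := by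
  have on_singleton : (μ - ν).restrict {x} = μ.restrict {x} - ν.restrict {x} :=
    Measure.restrict_sub_eq_restrict_sub_restrict (measurableSet_singleton x)
  rw [← Measure.restrict_apply_self (μ - ν), on_singleton]
  rcases le_total (μ {x}) (ν {x}) with h | h
  · have hle : μ.restrict {x} ≤ ν.restrict {x} := by
      simp only [Measure.restrict_singleton]
      gcongr
    rw [Measure.sub_eq_zero_of_le hle, tsub_eq_zero_of_le h, Measure.coe_zero, Pi.zero_apply]
  · have hle : ν.restrict {x} ≤ μ.restrict {x} := by
      simp only [Measure.restrict_singleton]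
      gcongr
    rw [Measure.sub_apply (measurableSet_singleton x) hle, Measure.restrict_apply_self,
      Measure.restrict_apply_self]

lemma Dk_eq_measureReal_sub [Countable X] [MeasurableSingletonClass X] (P Q : PMF X) (k : ℝ≥0) :
    Dk P Q k = (Q.toMeasure - k • P.toMeasure).real Set.univ := by
  have at_point (x : X) : (Q.toMeasure - k • P.toMeasure) {x} = Q x - k * P x := by
    rw [measure_sub_singleton, Measure.smul_apply,
      Q.toMeasure_apply_singleton x (measurableSet_singleton x),
      P.toMeasure_apply_singleton x (measurableSet_singleton x)]
    rfl
  have hQ (x : X) : Q x - k * P x ≠ ∞ := ENNReal.sub_ne_top (Q.apply_ne_top x)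
  rw [measureReal_def, ← Set.iUnion_of_singleton, measure_iUnion
    (fun x y hxy => Set.disjoint_singleton.2 hxy) measurableSet_singleton]
  simp only [at_point]
  rw [ENNReal.tsum_toReal_eq hQ]
  refine tsum_congr fun x => ?_
  have hkP : (k * P x : ℝ≥0∞).toReal = k * (P x).toReal := by
    rw [ENNReal.toReal_mul, ENNReal.coe_toReal]
  rw [← hkP]
  rcases le_total (Q x) (k * P x) with h | h
  · have hkP_ne_top := ENNReal.mul_ne_top (ENNReal.coe_ne_top (r := k)) (P.apply_ne_top x)
    rw [tsub_eq_zero_of_le h, ENNReal.toReal_zero,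
      max_eq_right (sub_nonpos.2 (ENNReal.toReal_mono hkP_ne_top h))]
  · rw [ENNReal.toReal_sub_of_le h (Q.apply_ne_top x),
      max_eq_left (sub_nonneg.2 (ENNReal.toReal_mono (Q.apply_ne_top x) h))]

end TruncatedDifference

section Resampling

variable {X : Type*} [MeasurableSpace X]

/-- The law of a marked point of `X`: the marked points (second coordinate `true`) are distributed
as `κ`, the unmarked ones as `δ`. -/
noncomputable def markedMeasure (κ δ : Measure X) : Measure (X × Bool) :=
  κ.map (·, true) + δ.map (·, false)

lemma map_fst_markedMeasure (κ δ : Measure X) : (markedMeasure κ δ).map Prod.fst = κ + δ := by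
  rw [markedMeasure, Measure.map_add _ _ measurable_fst,
    Measure.map_map measurable_fst (by fun_prop), Measure.map_map measurable_fst (by fun_prop)]
  simp [Function.comp_def]

instance (κ δ : Measure X) [IsProbabilityMeasure (κ + δ)] :
    IsProbabilityMeasure (markedMeasure κ δ) := by
  refine ⟨?_⟩
  rw [← measure_univ (μ := κ + δ), ← map_fst_markedMeasure,
    Measure.map_apply measurable_fst .univ, Set.preimage_univ]

lemma lintegral_markedMeasure (κ δ : Measure X) {φ : X × Bool → ℝ≥0∞} (hφ : Measurable φ) :
    ∫⁻ u, φ u ∂markedMeasure κ δ = ∫⁻ x, φ (x, true) ∂κ + ∫⁻ x, φ (x, false) ∂δ := by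
  rw [markedMeasure, lintegral_add_measure, lintegral_map hφ (by fun_prop),
    lintegral_map hφ (by fun_prop)]

lemma markedMeasure_real_snd_false (κ δ : Measure X) :
    (markedMeasure κ δ).real {u | u.2 = false} = δ.real Set.univ := by
  have hs : MeasurableSet {u : X × Bool | u.2 = false} :=
    measurable_snd (measurableSet_singleton false)
  rw [measureReal_def, measureReal_def, markedMeasure, Measure.add_apply,
    Measure.map_apply (by fun_prop) hs, Measure.map_apply (by fun_prop) hs]
  simp

/-- The kernel that keeps a marked point with probability `r ≤ 1` and otherwise, as well as for an
unmarked point, draws a fresh point from `ν`. -/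
noncomputable def resampleKernel (r : ℝ≥0) (ν : Measure X) : Kernel (X × Bool) X where
  toFun u := if u.2 then r • Measure.dirac u.1 + (1 - r) • ν else ν
  measurable' := by
    have measurable_smul_dirac : Measurable fun u : X × Bool => r • Measure.dirac u.1 :=
      Measure.measurable_of_measurable_coe _ fun s hs =>
        ((Measure.measurable_coe hs).comp
          (Measure.measurable_dirac.comp measurable_fst)).const_smul r
    exact .ite (measurable_snd (measurableSet_singleton true))
      (measurable_smul_dirac.add measurable_const) measurable_const

lemma resampleKernel_true (r : ℝ≥0) (ν : Measure X) (x : X) :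
    resampleKernel r ν (x, true) = r • Measure.dirac x + (1 - r) • ν := rfl

lemma resampleKernel_false (r : ℝ≥0) (ν : Measure X) (x : X) :
    resampleKernel r ν (x, false) = ν := rfl

lemma isMarkovKernel_resampleKernel {r : ℝ≥0} (hr : r ≤ 1) (ν : Measure X)
    [IsProbabilityMeasure ν] : IsMarkovKernel (resampleKernel r ν) := by
  refine ⟨fun ⟨x, b⟩ => ⟨?_⟩⟩
  cases b
  · rw [resampleKernel_false, measure_univ]
  · rw [resampleKernel_true, Measure.add_apply, Measure.smul_apply, Measure.smul_apply,
      measure_univ, measure_univ, ← add_smul, add_tsub_cancel_of_le hr, one_smul]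

lemma resampleKernel_comp_markedMeasure {r : ℝ≥0} (hr : r ≤ 1) (κ δ ν : Measure X)
    [IsProbabilityMeasure (κ + δ)] :
    resampleKernel r ν ∘ₘ markedMeasure κ δ = r • κ + (1 - r * κ Set.univ) • ν := by
  have weight_eq : (1 - r : ℝ≥0) * κ Set.univ + δ Set.univ = 1 - r * κ Set.univ := by
    have total : κ Set.univ + δ Set.univ = 1 := measure_univ (μ := κ + δ)
    have kept_ne_top : κ Set.univ ≠ ∞ := ne_top_of_le_ne_top ENNReal.one_ne_top
      (total ▸ le_self_add)
    refine ENNReal.eq_sub_of_add_eq (ENNReal.mul_ne_top ENNReal.coe_ne_top kept_ne_top) ?_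
    rw [add_right_comm, ← add_mul, ← ENNReal.coe_add, tsub_add_cancel_of_le hr, ENNReal.coe_one,
      one_mul, total]
  ext s hs
  rw [Measure.bind_apply hs (Kernel.aemeasurable _),
    lintegral_markedMeasure κ δ (Kernel.measurable_coe _ hs)]
  simp only [resampleKernel_true, resampleKernel_false, Measure.add_apply, Measure.smul_apply,
    Measure.dirac_apply' _ hs, ENNReal.smul_def, smul_eq_mul]
  rw [lintegral_add_right _ measurable_const, lintegral_const_mul _ (measurable_one.indicator hs),
    lintegral_indicator_one hs, lintegral_const, lintegral_const, ← weight_eq]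
  ring

lemma exists_eq_measure_univ_smul [Nonempty X] (ρ : Measure X) [IsFiniteMeasure ρ] :
    ∃ ν : Measure X, IsProbabilityMeasure ν ∧ ρ = ρ Set.univ • ν := by
  rcases eq_or_ne ρ 0 with rfl | hρ
  · exact ⟨.dirac (Classical.arbitrary X), inferInstance, by simp⟩
  · have : NeZero ρ := ⟨hρ⟩
    refine ⟨(ρ Set.univ)⁻¹ • ρ, inferInstance, ?_⟩
    rw [smul_smul, ENNReal.mul_inv_cancel (Measure.measure_univ_ne_zero.2 hρ)
      (measure_ne_top ρ _), one_smul]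

lemma exists_kernel_comp_markedMeasure_eq (P κ δ : Measure X) [IsProbabilityMeasure P]
    [IsProbabilityMeasure (κ + δ)] {r : ℝ≥0} (hr : r ≤ 1) (hκ : r • κ ≤ P) :
    ∃ K : Kernel (X × Bool) X, IsMarkovKernel K ∧ K ∘ₘ markedMeasure κ δ = P ∧
      ∀ x, r • Measure.dirac x ≤ K (x, true) := by
  have : Nonempty X := P.nonempty_of_neZero
  have : IsFiniteMeasure (r • κ) := isFiniteMeasure_of_le P hκ
  obtain ⟨ν, hν, residual_eq⟩ := exists_eq_measure_univ_smul (P - r • κ)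
  refine ⟨resampleKernel r ν, isMarkovKernel_resampleKernel hr ν, ?_, fun x => ?_⟩
  · rw [Measure.sub_apply .univ hκ, measure_univ] at residual_eq
    calc resampleKernel r ν ∘ₘ markedMeasure κ δ = r • κ + (1 - r * κ Set.univ) • ν :=
          resampleKernel_comp_markedMeasure hr κ δ ν
      _ = r • κ + (P - r • κ) := by rw [residual_eq]; rfl
      _ = P := by rw [add_comm, Measure.sub_add_cancel_of_le hκ]
  · exact Measure.le_add_right le_rfl

end Resampling

section ProductKernel

variable {ι : Type*} [Fintype ι] {U Z : ι → Type*} [∀ i, MeasurableSpace (U i)]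
  [∀ i, MeasurableSpace (Z i)]

/-- The kernel that resamples the coordinates independently, coordinate `i` through `κ i`. -/
noncomputable def piKernel (κ : ∀ i, Kernel (U i) (Z i)) [∀ i, IsMarkovKernel (κ i)] :
    Kernel (∀ i, U i) (∀ i, Z i) where
  toFun u := Measure.pi fun i => κ i (u i)
  measurable' := by
    refine Measurable.measure_of_isPiSystem_of_isProbabilityMeasure generateFrom_pi.symm
      isPiSystem_pi ?_
    rintro _ ⟨s, hs, rfl⟩
    simp_rw [Measure.pi_pi]
    exact Finset.measurable_prod _ fun i _ =>
      ((κ i).measurable_coe (hs i (Set.mem_univ i))).comp (measurable_pi_apply i)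

lemma piKernel_apply (κ : ∀ i, Kernel (U i) (Z i)) [∀ i, IsMarkovKernel (κ i)] (u : ∀ i, U i) :
    piKernel κ u = Measure.pi fun i => κ i (u i) := rfl

instance (κ : ∀ i, Kernel (U i) (Z i)) [∀ i, IsMarkovKernel (κ i)] :
    IsMarkovKernel (piKernel κ) :=
  ⟨fun u => by rw [piKernel_apply]; infer_instance⟩

lemma lintegral_prod_eval_pi (μ : ∀ i, Measure (U i)) [∀ i, IsProbabilityMeasure (μ i)]
    {φ : ∀ i, U i → ℝ≥0∞} (hφ : ∀ i, Measurable (φ i)) :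
    ∫⁻ u, ∏ i, φ i (u i) ∂Measure.pi μ = ∏ i, ∫⁻ x, φ i x ∂μ i := by
  rw [lintegral_prod_eq_prod_lintegral_of_indepFun Finset.univ (fun i (u : ∀ i, U i) => φ i (u i))
    (iIndepFun_pi fun i => (hφ i).aemeasurable) fun i => (hφ i).comp (measurable_pi_apply i)]
  exact Finset.prod_congr rfl fun i _ =>
    (measurePreserving_eval μ i).lintegral_comp (hφ i)

lemma piKernel_comp_pi (κ : ∀ i, Kernel (U i) (Z i)) [∀ i, IsMarkovKernel (κ i)]
    (μ : ∀ i, Measure (U i)) [∀ i, IsProbabilityMeasure (μ i)] :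
    piKernel κ ∘ₘ Measure.pi μ = Measure.pi fun i => κ i ∘ₘ μ i := by
  refine (Measure.pi_eq fun s hs => ?_).symm
  rw [Measure.bind_apply (.univ_pi hs) (Kernel.aemeasurable _)]
  simp_rw [piKernel_apply, Measure.pi_pi]
  rw [lintegral_prod_eval_pi μ fun i => (κ i).measurable_coe (hs i)]
  exact Finset.prod_congr rfl fun i _ => (Measure.bind_apply (hs i) (Kernel.aemeasurable _)).symm

end ProductKernel

lemma integral_comp_measure {U Z E : Type*} [MeasurableSpace U] [MeasurableSpace Z]
    [NormedAddCommGroup E] [NormedSpace ℝ E] (μ : Measure U) [SFinite μ] (K : Kernel U Z)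
    [IsSFiniteKernel K] {φ : Z → E} (hφ : Integrable φ (K ∘ₘ μ)) :
    ∫ z, φ z ∂(K ∘ₘ μ) = ∫ u, ∫ z, φ z ∂K u ∂μ := by
  rw [Measure.comp_eq_comp_const_apply] at hφ ⊢
  rw [Kernel.integral_comp hφ]
  rfl

section Supremum

variable {G : Type*} {V : Set G} {φ : G → ℝ} {B : ℝ}

lemma biSup_le_of_nonneg (hB : 0 ≤ B) (hφ : ∀ g ∈ V, φ g ≤ B) : ⨆ g ∈ V, φ g ≤ B :=
  Real.iSup_le (fun g => Real.iSup_le (hφ g) hB) hB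

lemma biSup_nonneg (hφ : ∀ g ∈ V, 0 ≤ φ g) : 0 ≤ ⨆ g ∈ V, φ g :=
  Real.iSup_nonneg fun g => Real.iSup_nonneg (hφ g)

lemma le_biSup_of_nonneg (hB : 0 ≤ B) (hφ : ∀ g ∈ V, φ g ≤ B) {g : G} (hg : g ∈ V) :
    φ g ≤ ⨆ g ∈ V, φ g := by
  have bdd : BddAbove (Set.range fun g => ⨆ _ : g ∈ V, φ g) :=
    ⟨B, Set.forall_mem_range.2 fun g => Real.iSup_le (hφ g) hB⟩
  exact le_ciSup_of_le bdd g (ciSup_pos (f := fun _ => φ g) hg).ge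

end Supremum

section DiscreteIntegrals

variable {U Z : Type*} [MeasurableSpace U] [DiscreteMeasurableSpace U]
  [MeasurableSpace Z] [DiscreteMeasurableSpace Z]

lemma integrable_of_mem_Icc_of_discrete (μ : Measure U) [IsFiniteMeasure μ] {φ : U → ℝ} {a b : ℝ}
    (hφ : ∀ u, φ u ∈ Set.Icc a b) : Integrable φ μ :=
  .of_mem_Icc a b Measurable.of_discrete.aemeasurable (.of_forall hφ)

lemma integral_biSup_le_mul_integral_biSup_comp {G : Type*} {V : Set G} {B k : ℝ} (hB : 0 ≤ B)
    (hk : 0 ≤ k) (μ : Measure U) [IsProbabilityMeasure μ] (K : Kernel U Z) [IsMarkovKernel K]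
    {a : G → Z → ℝ} (ha : ∀ g ∈ V, ∀ z, a g z ∈ Set.Icc 0 B)
    {b : G → U → ℝ} (hb : ∀ g ∈ V, ∀ u, b g u ∈ Set.Icc 0 (k * ∫ z, a g z ∂K u)) :
    ∫ u, ⨆ g ∈ V, b g u ∂μ ≤ k * ∫ z, ⨆ g ∈ V, a g z ∂(K ∘ₘ μ) := by
  have sup_mem (z : Z) : (⨆ g ∈ V, a g z) ∈ Set.Icc 0 B :=
    ⟨biSup_nonneg fun g hg => (ha g hg z).1, biSup_le_of_nonneg hB fun g hg => (ha g hg z).2⟩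
  have integral_sup_mem (u : U) : ∫ z, ⨆ g ∈ V, a g z ∂K u ∈ Set.Icc 0 B := by
    refine ⟨integral_nonneg fun z => (sup_mem z).1, ?_⟩
    calc ∫ z, ⨆ g ∈ V, a g z ∂K u ≤ ∫ _, B ∂K u :=
          integral_mono (integrable_of_mem_Icc_of_discrete _ sup_mem) (integrable_const B)
            fun z => (sup_mem z).2
      _ = B := by simp
  have pointwise_le (u : U) : ⨆ g ∈ V, b g u ≤ k * ∫ z, ⨆ g ∈ V, a g z ∂K u := by
    refine biSup_le_of_nonneg (mul_nonneg hk (integral_sup_mem u).1) fun g hg => ?_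
    refine (hb g hg u).2.trans (mul_le_mul_of_nonneg_left ?_ hk)
    exact integral_mono (integrable_of_mem_Icc_of_discrete _ (ha g hg))
      (integrable_of_mem_Icc_of_discrete _ sup_mem)
      fun z => le_biSup_of_nonneg hB (fun g hg => (ha g hg z).2) hg
  have bound_integrable : Integrable (fun u => k * ∫ z, ⨆ g ∈ V, a g z ∂K u) μ :=
    (integrable_of_mem_Icc_of_discrete μ integral_sup_mem).const_mul k
  rw [integral_comp_measure μ K (integrable_of_mem_Icc_of_discrete _ sup_mem),
    ← integral_const_mul]
  exact integral_mono_of_nonneg (.of_forall fun u => biSup_nonneg fun g hg => (hb g hg u).1)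
    bound_integrable (.of_forall pointwise_le)

end DiscreteIntegrals

lemma mul_le_integral_of_smul_dirac_le {Z : Type*} [MeasurableSpace Z]
    [MeasurableSingletonClass Z] {r : ℝ≥0} {x : Z} {κ : Measure Z} {φ : Z → ℝ}
    (hφ : 0 ≤ φ) (hφκ : Integrable φ κ) (hκ : r • Measure.dirac x ≤ κ) :
    r * φ x ≤ ∫ z, φ z ∂κ := by
  calc r * φ x = ∫ z, φ z ∂(r • Measure.dirac x) := by
        rw [integral_smul_nnreal_measure, integral_dirac]; rfl
    _ ≤ ∫ z, φ z ∂κ := integral_mono_measure hκ (.of_forall hφ) hφκ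

section Product

variable {ι : Type*} [Fintype ι] {U X : Type*} [MeasurableSpace U] [MeasurableSpace X]

lemma integral_sum_eval_pi {U : ι → Type*} [∀ i, MeasurableSpace (U i)]
    (μ : ∀ i, Measure (U i)) [∀ i, IsProbabilityMeasure (μ i)] {φ : ∀ i, U i → ℝ}
    (hφ : ∀ i, Integrable (φ i) (μ i)) :
    ∫ u, ∑ i, φ i (u i) ∂Measure.pi μ = ∑ i, ∫ x, φ i x ∂μ i := by
  rw [integral_finsetSum _ fun i _ => integrable_comp_eval (hφ i)]
  exact Finset.sum_congr rfl fun i _ => integral_comp_eval (hφ i).aestronglyMeasurable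

lemma integral_card_filter_pi (μ : Measure U) [IsProbabilityMeasure μ] {p : U → Prop}
    [DecidablePred p] (hp : MeasurableSet {x | p x}) :
    ∫ u : ι → U, (#{i | p (u i)} : ℝ) ∂Measure.pi (fun _ => μ) =
      Fintype.card ι * μ.real {x | p x} := by
  have card_eq_sum (u : ι → U) :
      (#{i | p (u i)} : ℝ) = ∑ i, {x | p x}.indicator (fun _ => (1 : ℝ)) (u i) := by
    simp [Set.indicator_apply]
  simp_rw [card_eq_sum]
  rw [integral_sum_eval_pi _ fun i => (integrable_const 1).indicator hp]
  simp [integral_indicator hp]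

lemma sum_marked_le_mul_integral_piKernel [DiscreteMeasurableSpace X] {r : ℝ≥0} (hr : r ≠ 0)
    (K : Kernel (X × Bool) X) [IsMarkovKernel K]
    (hK : ∀ x, r • Measure.dirac x ≤ K (x, true)) {φ : X → ℝ} {B : ℝ}
    (hφ : ∀ x, φ x ∈ Set.Icc 0 B) (u : ι → X × Bool) :
    ∑ i with (u i).2 = true, φ (u i).1 ≤
      (r : ℝ)⁻¹ * ∫ z, ∑ i, φ (z i) ∂piKernel (fun _ => K) u := by
  have hφK (u : X × Bool) : Integrable φ (K u) := integrable_of_mem_Icc_of_discrete _ hφ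
  rw [piKernel_apply, integral_sum_eval_pi _ fun i => hφK (u i),
    le_inv_mul_iff₀ (by positivity), Finset.mul_sum]
  calc ∑ i with (u i).2 = true, r * φ (u i).1
      ≤ ∑ i with (u i).2 = true, ∫ z, φ z ∂K (u i) := by
        refine Finset.sum_le_sum fun i hi => ?_
        have hK_marked := hK (u i).1
        rw [← (Finset.mem_filter.1 hi).2] at hK_marked
        exact mul_le_integral_of_smul_dirac_le (fun x => (hφ x).1) (hφK (u i)) hK_marked
    _ ≤ ∑ i, ∫ z, φ z ∂K (u i) :=
        Finset.sum_le_sum_of_subset_of_nonneg (Finset.filter_subset _ _) fun i _ _ =>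
          integral_nonneg fun x => (hφ x).1

end Product

section SelectiveLoss

variable {X Y : Type*} {ℓ : Y → Y → ℝ} {B c : ℝ} {n : ℕ} {V : Set (X → Y)}

lemma selLoss_mem_Icc (hℓ : ∀ y y', ℓ y y' ∈ Set.Icc 0 B) (hc : 0 ≤ c) (hB : 0 ≤ B)
    (x : Fin n → X) (f h : X → Y) (A : Finset (Fin n)) :
    selLoss ℓ c x f h A ∈ Set.Icc 0 (c + B) := by
  have sum_le : ∑ i ∈ Aᶜ, ℓ (f (x i)) (h (x i)) ≤ #Aᶜ * B := by
    simpa only [nsmul_eq_mul] using Finset.sum_le_card_nsmul _ _ B fun i _ => (hℓ _ _).2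
  refine ⟨add_nonneg (by positivity)
    (mul_nonneg (by positivity) (Finset.sum_nonneg fun i _ => (hℓ _ _).1)), add_le_add ?_ ?_⟩
  · rw [div_mul_eq_mul_div]
    exact div_le_of_le_mul₀ (by positivity) hc (by gcongr; exact card_finset_fin_le A)
  · rw [one_div_mul_eq_div]
    refine div_le_of_le_mul₀ (by positivity) hB (sum_le.trans ?_)
    rw [mul_comm]
    gcongr
    exact card_finset_fin_le _

lemma selLoss_le_worstSelLoss_s3 (hℓ : ∀ y y', ℓ y y' ∈ Set.Icc 0 B) (hc : 0 ≤ c) (hB : 0 ≤ B)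
    (x : Fin n → X) {f : X → Y} (hf : f ∈ V) (h : X → Y) (A : Finset (Fin n)) :
    selLoss ℓ c x f h A ≤ worstSelLoss ℓ c x V h A :=
  le_biSup_of_nonneg (φ := fun g => selLoss ℓ c x g h A) (add_nonneg hc hB)
    (fun g _ => (selLoss_mem_Icc hℓ hc hB x g h A).2) hf

lemma worstSelLoss_mem_Icc (hℓ : ∀ y y', ℓ y y' ∈ Set.Icc 0 B) (hc : 0 ≤ c) (hB : 0 ≤ B)
    (x : Fin n → X) (V : Set (X → Y)) (h : X → Y) (A : Finset (Fin n)) :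
    worstSelLoss ℓ c x V h A ∈ Set.Icc 0 (c + B) :=
  ⟨biSup_nonneg fun g _ => (selLoss_mem_Icc hℓ hc hB x g h A).1,
    biSup_le_of_nonneg (add_nonneg hc hB) fun g _ => (selLoss_mem_Icc hℓ hc hB x g h A).2⟩

lemma iInf_worstSelLoss_mem_Icc (hℓ : ∀ y y', ℓ y y' ∈ Set.Icc 0 B) (hc : 0 ≤ c) (hB : 0 ≤ B)
    (x : Fin n → X) (V : Set (X → Y)) (h : X → Y) :
    ⨅ A, worstSelLoss ℓ c x V h A ∈ Set.Icc 0 (c + B) :=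
  ⟨le_ciInf fun A => (worstSelLoss_mem_Icc hℓ hc hB x V h A).1,
    (ciInf_le (Set.finite_range _).bddBelow ∅).trans (worstSelLoss_mem_Icc hℓ hc hB x V h ∅).2⟩

lemma worstSelLoss_le_add_worstSelLoss_zero (hℓ : ∀ y y', ℓ y y' ∈ Set.Icc 0 B) (hc : 0 ≤ c)
    (hB : 0 ≤ B) (x : Fin n → X) (V : Set (X → Y)) (h : X → Y) (A : Finset (Fin n)) :
    worstSelLoss ℓ c x V h A ≤ c / n * #A + worstSelLoss ℓ 0 x V h A := by
  have rhs_nonneg : 0 ≤ c / n * #A + worstSelLoss ℓ 0 x V h A :=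
    add_nonneg (by positivity) (worstSelLoss_mem_Icc hℓ le_rfl hB x V h A).1
  refine biSup_le_of_nonneg rhs_nonneg fun g hg => ?_
  calc selLoss ℓ c x g h A = c / n * #A + selLoss ℓ 0 x g h A := by simp [selLoss]
    _ ≤ c / n * #A + worstSelLoss ℓ 0 x V h A := by
      gcongr
      exact selLoss_le_worstSelLoss_s3 hℓ le_rfl hB x hg h A

end SelectiveLoss

section Transfer

variable {X Y : Type*} [Countable X] [MeasurableSpace X] [DiscreteMeasurableSpace X]
  {ℓ : Y → Y → ℝ} {B c : ℝ} {n : ℕ}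

lemma integral_iInf_worstSelLoss_map_fst_le (hℓ : ∀ y y', ℓ y y' ∈ Set.Icc 0 B) (hc : 0 ≤ c)
    (hB : 0 ≤ B) (hn : 0 < n) (μ : Measure (X × Bool)) [IsProbabilityMeasure μ]
    (V : Set (X → Y)) (h : X → Y) :
    ∫ x : Fin n → X, ⨅ A, worstSelLoss ℓ c x V h A ∂Measure.pi (fun _ => μ.map Prod.fst) ≤
      c * μ.real {u | u.2 = false} +
        ∫ u : Fin n → X × Bool, worstSelLoss ℓ 0 (fun i => (u i).1) V h {i | (u i).2 = false}
          ∂Measure.pi (fun _ => μ) := by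
  have card_integrable : Integrable (fun u : Fin n → X × Bool => (#{i | (u i).2 = false} : ℝ))
      (Measure.pi fun _ => μ) :=
    integrable_of_mem_Icc_of_discrete _ fun u =>
      ⟨Nat.cast_nonneg _, Nat.cast_le.2 (card_finset_fin_le _)⟩
  have kept_integrable : Integrable (fun u : Fin n → X × Bool =>
      worstSelLoss ℓ 0 (fun i => (u i).1) V h {i | (u i).2 = false}) (Measure.pi fun _ => μ) :=
    integrable_of_mem_Icc_of_discrete _ fun u => worstSelLoss_mem_Icc hℓ le_rfl hB _ V h _
  rw [← Measure.pi_map_pi fun _ => measurable_fst.aemeasurable,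
    integral_map Measurable.of_discrete.aemeasurable Measurable.of_discrete.aestronglyMeasurable]
  calc ∫ u, ⨅ A, worstSelLoss ℓ c (fun i => (u i).1) V h A ∂Measure.pi (fun _ => μ)
      ≤ ∫ u, (c / n * #{i | (u i).2 = false} +
          worstSelLoss ℓ 0 (fun i => (u i).1) V h {i | (u i).2 = false})
            ∂Measure.pi (fun _ => μ) :=
        integral_mono
          (integrable_of_mem_Icc_of_discrete _ fun u => iInf_worstSelLoss_mem_Icc hℓ hc hB _ V h)
          ((card_integrable.const_mul _).add kept_integrable) fun u =>
            (ciInf_le (Set.finite_range _).bddBelow _).trans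
              (worstSelLoss_le_add_worstSelLoss_zero hℓ hc hB _ V h _)
    _ = c * μ.real {u | u.2 = false} + ∫ u, worstSelLoss ℓ 0 (fun i => (u i).1) V h
          {i | (u i).2 = false} ∂Measure.pi (fun _ => μ) := by
      rw [integral_add (card_integrable.const_mul _) kept_integrable, integral_const_mul,
        integral_card_filter_pi μ (p := fun u => u.2 = false) .of_discrete, Fintype.card_fin]
      field_simp

lemma integral_worstSelLoss_zero_le_mul_integral_worstLoss
    (hℓ : ∀ y y', ℓ y y' ∈ Set.Icc 0 B) (hB : 0 ≤ B) (μ : Measure (X × Bool))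
    [IsProbabilityMeasure μ] {r : ℝ≥0} (hr : r ≠ 0) (K : Kernel (X × Bool) X) [IsMarkovKernel K]
    (hK : ∀ x, r • Measure.dirac x ≤ K (x, true)) (V : Set (X → Y)) (h : X → Y) :
    ∫ u : Fin n → X × Bool, worstSelLoss ℓ 0 (fun i => (u i).1) V h {i | (u i).2 = false}
        ∂Measure.pi (fun _ => μ) ≤
      (r : ℝ)⁻¹ * ∫ z : Fin n → X, worstLoss ℓ z V h ∂Measure.pi (fun _ => K ∘ₘ μ) := by
  rw [← piKernel_comp_pi (fun _ => K) fun _ => μ]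
  refine integral_biSup_le_mul_integral_biSup_comp hB (by positivity) (Measure.pi fun _ => μ)
    (piKernel fun _ => K) (fun g _ z => ?_) fun g _ u =>
      ⟨(selLoss_mem_Icc hℓ le_rfl hB _ g h _).1, ?_⟩
  · simpa [selLoss] using selLoss_mem_Icc hℓ le_rfl hB z g h ∅
  · calc selLoss ℓ 0 (fun i => (u i).1) g h {i | (u i).2 = false}
        = 1 / n * ∑ i with (u i).2 = true, ℓ (g (u i).1) (h (u i).1) := by
          simp [selLoss, Finset.compl_filter]
      _ ≤ 1 / n * ((r : ℝ)⁻¹ * ∫ z : Fin n → X, ∑ i, ℓ (g (z i)) (h (z i))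
            ∂piKernel (fun _ => K) u) := by
          gcongr
          exact sum_marked_le_mul_integral_piKernel hr K hK (φ := fun x => ℓ (g x) (h x))
            (fun x => hℓ _ _) u
      _ = (r : ℝ)⁻¹ * ∫ z : Fin n → X, 1 / n * ∑ i, ℓ (g (z i)) (h (z i))
            ∂piKernel (fun _ => K) u := by
          rw [integral_const_mul, mul_left_comm]

lemma integral_iInf_worstSelLoss_le (hℓ : ∀ y y', ℓ y y' ∈ Set.Icc 0 B) (hc : 0 ≤ c)
    (hB : 0 ≤ B) (hn : 0 < n) (P Q : Measure X) [IsProbabilityMeasure P] [IsProbabilityMeasure Q]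
    {k : ℝ≥0} (hk : 1 ≤ k) (V : Set (X → Y)) (h : X → Y) :
    ∫ x : Fin n → X, ⨅ A, worstSelLoss ℓ c x V h A ∂Measure.pi (fun _ => Q) ≤
      c * (Q - k • P).real Set.univ +
        k * ∫ z : Fin n → X, worstLoss ℓ z V h ∂Measure.pi (fun _ => P) := by
  have k_ne_zero : k ≠ 0 := (zero_lt_one.trans_le hk).ne'
  obtain ⟨κ, hκ, decomposition⟩ := exists_le_add_measure_sub_eq Q (k • P)
  set δ := Q - k • P
  have : IsProbabilityMeasure (κ + δ) := by rwa [decomposition]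
  have smul_le : k⁻¹ • κ ≤ P := by
    calc k⁻¹ • κ ≤ k⁻¹ • k • P := by gcongr
      _ = P := inv_smul_smul₀ k_ne_zero P
  obtain ⟨K, hKmarkov, hKP, hKdirac⟩ :=
    exists_kernel_comp_markedMeasure_eq P κ δ (inv_le_one_of_one_le₀ hk) smul_le
  have marked := integral_iInf_worstSelLoss_map_fst_le hℓ hc hB hn (markedMeasure κ δ) V h
  have transfer := integral_worstSelLoss_zero_le_mul_integral_worstLoss (n := n) hℓ hB
    (markedMeasure κ δ) (inv_ne_zero k_ne_zero) K hKdirac V h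
  rw [map_fst_markedMeasure, decomposition, markedMeasure_real_snd_false] at marked
  rw [hKP, NNReal.coe_inv, inv_inv] at transfer
  exact marked.trans (add_le_add_right transfer _)

end Transfer

theorem stmt_3_general {X Y : Type*} [Countable X] [MeasurableSpace X] [DiscreteMeasurableSpace X]
    {ℓ : Y → Y → ℝ} {B : ℝ} (hℓ : ∀ y y', ℓ y y' ∈ Set.Icc 0 B) {c : ℝ} (hc : 0 ≤ c) {n : ℕ}
    (hn : 0 < n) (P Q : PMF X) (V : Set (X → Y)) {f : X → Y} (hf : f ∈ V) (h : X → Y)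
    {Astar : (Fin n → X) → Finset (Fin n)}
    (hAstar : ∀ (x : Fin n → X) (A : Finset (Fin n)),
      worstSelLoss ℓ c x V h (Astar x) ≤ worstSelLoss ℓ c x V h A) :
    (∀ k : ℝ, 1 ≤ k →
      (∫ x : Fin n → X, (⨅ A : Finset (Fin n), worstSelLoss ℓ c x V h A)
          ∂(Measure.pi fun _ => Q.toMeasure)) ≤
        c * Dk P Q k +
          k * ∫ z : Fin n → X, worstLoss ℓ z V h ∂(Measure.pi fun _ => P.toMeasure)) ∧
    (∫ x : Fin n → X, selLoss ℓ c x f h (Astar x)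
        ∂(Measure.pi fun _ => Q.toMeasure)) ≤
      ⨅ k : {k : ℝ // 1 ≤ k},
        (c * Dk P Q (k : ℝ) +
          (k : ℝ) * ∫ z : Fin n → X, worstLoss ℓ z V h
            ∂(Measure.pi fun _ => P.toMeasure)) := by
  obtain ⟨x₀, -⟩ := P.support_nonempty
  have hB : 0 ≤ B := (hℓ (f x₀) (f x₀)).1.trans (hℓ (f x₀) (f x₀)).2
  have bound (k : ℝ) (hk : 1 ≤ k) :
      (∫ x : Fin n → X, (⨅ A, worstSelLoss ℓ c x V h A) ∂Measure.pi fun _ => Q.toMeasure) ≤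
        c * Dk P Q k +
          k * ∫ z : Fin n → X, worstLoss ℓ z V h ∂Measure.pi fun _ => P.toMeasure := by
    lift k to ℝ≥0 using zero_le_one.trans hk
    rw [Dk_eq_measureReal_sub]
    exact integral_iInf_worstSelLoss_le hℓ hc hB hn P.toMeasure Q.toMeasure hk V h
  refine ⟨bound, ?_⟩
  have : Nonempty {k : ℝ // 1 ≤ k} := ⟨1, le_rfl⟩
  refine le_ciInf fun k => le_trans ?_ (bound k k.2)
  exact integral_mono
    (integrable_of_mem_Icc_of_discrete _ fun x => selLoss_mem_Icc hℓ hc hB x f h _)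
    (integrable_of_mem_Icc_of_discrete _ fun x => iInf_worstSelLoss_mem_Icc hℓ hc hB x V h)
    fun x => le_ciInf fun A =>
      (selLoss_le_worstSelLoss_s3 hℓ hc hB x hf h _).trans (hAstar x A)

theorem stmt_3 {X Y : Type*} [Countable X] [MeasurableSpace X] [DiscreteMeasurableSpace X]
    (ℓ : Y → Y → ℝ) (hℓ : ∀ y y', ℓ y y' ∈ Set.Icc (0 : ℝ) 1)
    (c : ℝ) (hc : c ∈ Set.Ioc (0 : ℝ) 1) {n : ℕ} (hn : 0 < n)
    (P Q : PMF X) (V : Set (X → Y)) (hV : V.Nonempty)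
    (f : X → Y) (hf : f ∈ V) (h : X → Y)
    (Astar : (Fin n → X) → Finset (Fin n))
    (hAstar : ∀ (x : Fin n → X) (A : Finset (Fin n)),
      worstSelLoss ℓ c x V h (Astar x) ≤ worstSelLoss ℓ c x V h A) :
    (∀ k : ℝ, 1 ≤ k →
      (∫ x : Fin n → X, (⨅ A : Finset (Fin n), worstSelLoss ℓ c x V h A)
          ∂(Measure.pi fun _ => Q.toMeasure)) ≤
        c * Dk P Q k +
          k * ∫ z : Fin n → X, worstLoss ℓ z V h ∂(Measure.pi fun _ => P.toMeasure)) ∧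
    (∫ x : Fin n → X, selLoss ℓ c x f h (Astar x)
        ∂(Measure.pi fun _ => Q.toMeasure)) ≤
      ⨅ k : {k : ℝ // 1 ≤ k},
        (c * Dk P Q (k : ℝ) +
          (k : ℝ) * ∫ z : Fin n → X, worstLoss ℓ z V h
            ∂(Measure.pi fun _ => P.toMeasure)) := by
  exact stmt_3_general hℓ hc.1.le hn P Q V hf h hAstar
end

section
/- Let F be a class of functions X → {0,1} of VC dimension d, let f ∈ F, let P be a probability distribution on X, and let δ ∈ (0,1]. Then with probability at least 1 − δ over independent samples x̄, z ~ P^n: L_z(VS(x̄, f(x̄)), f) < (d·log₂(2n) + log₂(1/δ)) / n, where the loss is the 0-1 loss ℓ(y,ŷ) = |y − ŷ|. -/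
open Finset MeasureTheory

/-- A class `F` of binary classifiers shatters a finite set `S`. -/
def Shatters {X : Type*} (F : Set (X → Bool)) (S : Finset X) : Prop :=
  ∀ b : X → Bool, ∃ g ∈ F, ∀ a ∈ S, g a = b a

/-- The 0-1 loss. -/
noncomputable def loss01 : Bool → Bool → ℝ := fun y y' => if y = y' then 0 else 1

/-- Version space: classifiers in `F` consistent with the labeled data. -/
def VS {X : Type*} (F : Set (X → Bool)) {n : ℕ} (xb : Fin n → X) (yb : Fin n → Bool) :
    Set (X → Bool) :=
  {g ∈ F | ∀ i, g (xb i) = yb i}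

/-- `L_z(V,h) = sup_{g ∈ V} (1/n)·Σ_i ℓ(g(z_i), h(z_i))` with the 0-1 loss. -/
noncomputable def worstLoss01 {X : Type*} {n : ℕ}
    (z : Fin n → X) (V : Set (X → Bool)) (h : X → Bool) : ℝ :=
  ⨆ g ∈ V, (1 / (n : ℝ)) * ∑ i, loss01 (g (z i)) (h (z i))

/-! Call `g ∈ F` bad for a pair of samples if it agrees with the target on the first but errs at
least `k` times on the second. Exchanging the `i`-th entries of the two samples, for any set of
indices `i`, preserves their joint law, so it suffices to bound, for a fixed pair, the proportion of
exchanges that make some classifier bad. A fixed classifier is bad for at most a proportion `2⁻ᵏ` of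
them: each of its errors has to stay in the second sample. By Sauer–Shelah, classifiers differing
from the target on the `2n` sample points have at most `(2n)ᵈ` distinct traces there, so a union
bound gives `(2n)ᵈ / 2ᵏ`, which is at most `δ` for `k = ⌈d log₂ (2n) + log₂ (1/δ)⌉`. -/

theorem sum_choose_le_pow_add_one (m d : ℕ) : ∑ k ∈ Iic d, m.choose k ≤ m ^ d + 1 := by
  rw [← Nat.range_succ_eq_Iic]
  induction d with
  | zero => simp
  | succ d ih =>
    rw [sum_range_succ]
    rcases Nat.eq_zero_or_pos d with rfl | hd
    · simp [add_comm]
    rcases Nat.eq_zero_or_pos m with rfl | hm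
    · simpa [hd.ne'] using ih
    have choose_le : m.choose (d + 1) ≤ m ^ d * (m - 1) :=
      calc m.choose (d + 1) ≤ m.choose (d + 1) * (d + 1) := Nat.le_mul_of_pos_right _ d.succ_pos
        _ = m.choose d * (m - d) := Nat.choose_succ_right_eq m d
        _ ≤ m ^ d * (m - 1) := Nat.mul_le_mul (Nat.choose_le_pow m d) (by omega)
    have pow_split : m ^ (d + 1) = m ^ d + m ^ d * (m - 1) := by
      rw [← mul_one_add, Nat.add_sub_of_le (show 1 ≤ m from hm), pow_succ]
    omega

section Trace

variable {X ι : Type*} [Fintype ι]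

/-- The traces on the points `q` of the sets indicated by the classifiers in `F`, as sets of
indices, so that Mathlib's Sauer–Shelah lemma for finite set families applies to them. -/
noncomputable def traceFamily (F : Set (X → Bool)) (q : ι → X) : Finset (Finset ι) :=
  (Set.toFinite ((fun g => ({i | g (q i)} : Finset ι)) '' F)).toFinset

theorem mem_traceFamily {F : Set (X → Bool)} {q : ι → X} {A : Finset ι} :
    A ∈ traceFamily F q ↔ ∃ g ∈ F, ({i | g (q i)} : Finset ι) = A := by
  simp [traceFamily]

variable {F : Set (X → Bool)} {q : ι → X} {S : Finset ι}

theorem exists_mem_forall_eq_of_shatters_traceFamily [DecidableEq ι]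
    (hS : (traceFamily F q).Shatters S) (b : ι → Bool) : ∃ g ∈ F, ∀ i ∈ S, g (q i) = b i := by
  obtain ⟨A, hA, hSA⟩ := hS (filter_subset (fun i => b i) S)
  obtain ⟨g, hg, rfl⟩ := mem_traceFamily.1 hA
  refine ⟨g, hg, fun i hi => ?_⟩
  simpa [hi] using congrArg (i ∈ ·) hSA

theorem injOn_of_shatters_traceFamily [DecidableEq ι] (hS : (traceFamily F q).Shatters S) :
    Set.InjOn q S := by
  intro i hi j hj hij
  obtain ⟨g, -, hg⟩ := exists_mem_forall_eq_of_shatters_traceFamily hS fun l => decide (l = i)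
  have hgj := hg j hj
  rw [← hij, hg i hi] at hgj
  simpa [eq_comm] using hgj

theorem shatters_image_of_shatters_traceFamily [DecidableEq ι] [DecidableEq X]
    (hS : (traceFamily F q).Shatters S) : Shatters F (S.image q) := by
  intro b
  obtain ⟨g, hg, hgb⟩ := exists_mem_forall_eq_of_shatters_traceFamily hS (b ∘ q)
  exact ⟨g, hg, forall_mem_image.2 hgb⟩

theorem vcDim_traceFamily_le [DecidableEq ι] {d : ℕ}
    (hVC : ∀ S : Finset X, Shatters F S → #S ≤ d) (q : ι → X) : (traceFamily F q).vcDim ≤ d := by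
  classical
  refine Finset.sup_le fun S hS => ?_
  rw [mem_shatterer] at hS
  rw [← card_image_of_injOn (injOn_of_shatters_traceFamily hS)]
  exact hVC _ (shatters_image_of_shatters_traceFamily hS)

theorem card_traceFamily_le {d : ℕ} (hVC : ∀ S : Finset X, Shatters F S → #S ≤ d) (q : ι → X) :
    #(traceFamily F q) ≤ Fintype.card ι ^ d + 1 := by
  classical
  calc #(traceFamily F q) ≤ #(traceFamily F q).shatterer := card_le_card_shatterer _
    _ ≤ ∑ k ∈ Iic (traceFamily F q).vcDim, (Fintype.card ι).choose k :=
      card_shatterer_le_sum_vcDim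
    _ ≤ ∑ k ∈ Iic d, (Fintype.card ι).choose k :=
      sum_le_sum_of_subset (Iic_subset_Iic.2 (vcDim_traceFamily_le hVC q))
    _ ≤ Fintype.card ι ^ d + 1 := sum_choose_le_pow_add_one _ _

theorem exists_finset_card_le_pow_forall_comp_eq {d : ℕ}
    (hVC : ∀ S : Finset X, Shatters F S → #S ≤ d) {f : X → Bool} (hf : f ∈ F) (q : ι → X) :
    ∃ G : Finset (X → Bool), #G ≤ Fintype.card ι ^ d ∧
      ∀ g ∈ F, g ∘ q ≠ f ∘ q → ∃ g' ∈ G, g ∘ q = g' ∘ q := by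
  classical
  let trace (g : X → Bool) : Finset ι := {i | g (q i)}
  have comp_eq {g g' : X → Bool} (h : trace g = trace g') : g ∘ q = g' ∘ q := by
    ext i
    simpa [trace, ← Bool.eq_iff_iff] using Finset.ext_iff.1 h i
  have exists_rep : ∀ A ∈ traceFamily F q, ∃ g, trace g = A := fun A hA =>
    (mem_traceFamily.1 hA).imp fun _ h => h.2
  choose! rep trace_rep using exists_rep
  refine ⟨((traceFamily F q).erase (trace f)).image rep, ?_, fun g hg hgf => ?_⟩
  · have card_erase := card_erase_of_mem (mem_traceFamily.2 ⟨f, hf, rfl⟩ : trace f ∈ _)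
    have card_le := card_traceFamily_le hVC q
    exact card_image_le.trans (by omega)
  · have mem : trace g ∈ traceFamily F q := mem_traceFamily.2 ⟨g, hg, rfl⟩
    exact ⟨rep (trace g), mem_image_of_mem _ (mem_erase.2 ⟨fun h => hgf (comp_eq h), mem⟩),
      comp_eq (trace_rep _ mem).symm⟩

end Trace

section Exchange

variable {X ι : Type*}

/-- Exchanges the `i`-th entries of the two samples for every `i` with `σ i = true`; these are the
symmetries of the joint law over which the failure event is averaged. -/
def exchange (σ : ι → Bool) (p : (ι → X) × (ι → X)) : (ι → X) × (ι → X) :=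
  (fun i => if σ i then p.2 i else p.1 i, fun i => if σ i then p.1 i else p.2 i)

theorem exchange_fst_eq_snd_of_ne {σ τ : ι → Bool} {i : ι} (h : σ i ≠ τ i)
    (p : (ι → X) × (ι → X)) : (exchange σ p).1 i = (exchange τ p).2 i := by
  cases hσ : σ i <;> cases hτ : τ i <;> simp_all [exchange]

variable [Fintype ι]

theorem measurePreserving_exchange [MeasurableSpace X] (P : Measure X) [SigmaFinite P]
    (σ : ι → Bool) :
    MeasurePreserving (exchange σ)
      ((Measure.pi fun _ : ι => P).prod (Measure.pi fun _ : ι => P))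
      ((Measure.pi fun _ : ι => P).prod (Measure.pi fun _ : ι => P)) := by
  let swapIf (i : ι) : X × X → X × X := if σ i then Prod.swap else id
  have hswapIf (i : ι) : MeasurePreserving (swapIf i) (P.prod P) (P.prod P) := by
    by_cases hi : σ i
    · simpa only [swapIf, if_pos hi] using Measure.measurePreserving_swap
    · simpa only [swapIf, if_neg hi] using MeasurePreserving.id _
  have unzip := measurePreserving_arrowProdEquivProdArrow X X ι (fun _ => P) fun _ => P
  convert unzip.comp ((measurePreserving_pi _ _ hswapIf).comp unzip.symm) using 1
  ext p i <;> cases hi : σ i <;>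
    simp [exchange, swapIf, hi, MeasurableEquiv.arrowProdEquivProdArrow,
      Equiv.arrowProdEquivProdArrow]

theorem card_filter_forall_mem_eq_mul_two_pow [DecidableEq ι] (I : Finset ι) (τ : ι → Bool) :
    #{σ : ι → Bool | ∀ i ∈ I, σ i = τ i} * 2 ^ #I = 2 ^ Fintype.card ι := by
  have filter_eq : ({σ : ι → Bool | ∀ i ∈ I, σ i = τ i} : Finset (ι → Bool)) =
      Fintype.piFinset fun i => if i ∈ I then {τ i} else univ := by
    ext σ
    simp only [mem_filter, mem_univ, true_and, Fintype.mem_piFinset]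
    refine forall_congr' fun i => ?_
    by_cases hi : i ∈ I <;> simp [hi]
  have card_eq : #{σ : ι → Bool | ∀ i ∈ I, σ i = τ i} = 2 ^ #Iᶜ := by
    rw [filter_eq, Fintype.card_piFinset, ← prod_const, ← prod_subset (subset_univ Iᶜ)]
    · exact prod_congr rfl fun i hi => by simp [mem_compl.1 hi]
    · intro i _ hi
      simp [notMem_compl.1 hi]
  rw [card_eq, ← pow_add, card_compl_add_card]

/-- The indices at which `g` misclassifies the sample `x` labelled by `f`. -/
def errorSet (f g : X → Bool) (x : ι → X) : Finset ι := {i | g (x i) ≠ f (x i)}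

theorem mem_errorSet {f g : X → Bool} {x : ι → X} {i : ι} :
    i ∈ errorSet f g x ↔ g (x i) ≠ f (x i) := by
  simp [errorSet]

/-- `g` lies in the version space of the first sample, labelled by `f`, but makes at least `k`
errors on the second one. -/
def HidesErrors (f g : X → Bool) (k : ℕ) (p : (ι → X) × (ι → X)) : Prop :=
  (∀ i, g (p.1 i) = f (p.1 i)) ∧ k ≤ #(errorSet f g p.2)

theorem not_hidesErrors_self (f : X → Bool) {k : ℕ} (hk : 0 < k) (p : (ι → X) × (ι → X)) :
    ¬ HidesErrors f f k p := by
  simp [HidesErrors, errorSet, hk.ne']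

theorem hidesErrors_exchange_congr {f g g' : X → Bool} {k : ℕ} {p : (ι → X) × (ι → X)}
    (h : g ∘ Sum.elim p.1 p.2 = g' ∘ Sum.elim p.1 p.2) (σ : ι → Bool) :
    HidesErrors f g k (exchange σ p) ↔ HidesErrors f g' k (exchange σ p) := by
  have eq_fst (i : ι) : g (p.1 i) = g' (p.1 i) := congrFun h (Sum.inl i)
  have eq_snd (i : ι) : g (p.2 i) = g' (p.2 i) := congrFun h (Sum.inr i)
  simp only [HidesErrors, errorSet, exchange, apply_ite g, apply_ite g', eq_fst, eq_snd]

open Classical in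
-- All exchanges counted here agree on the errors of any one of them: exchanging an error
-- differently would move it into the first sample.
theorem card_hidesErrors_exchange_mul_two_pow_le (f g : X → Bool) (k : ℕ)
    (p : (ι → X) × (ι → X)) :
    #{σ : ι → Bool | HidesErrors f g k (exchange σ p)} * 2 ^ k ≤ 2 ^ Fintype.card ι := by
  rcases eq_empty_or_nonempty {σ : ι → Bool | HidesErrors f g k (exchange σ p)} with
    hempty | ⟨τ, hτ⟩
  · simp [hempty]
  set E := errorSet f g (exchange τ p).2 with hE
  have hkE : k ≤ #E := (mem_filter.1 hτ).2.2
  have agree_on_errors : ({σ | HidesErrors f g k (exchange σ p)} : Finset (ι → Bool)) ⊆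
      ({σ | ∀ i ∈ E, σ i = τ i} : Finset (ι → Bool)) := by
    refine monotone_filter_right _ fun σ _ hσ i hi => ?_
    by_contra hne
    rw [hE, mem_errorSet, ← exchange_fst_eq_snd_of_ne hne] at hi
    exact hi (hσ.1 i)
  calc _ ≤ #{σ : ι → Bool | ∀ i ∈ E, σ i = τ i} * 2 ^ #E :=
        Nat.mul_le_mul (card_le_card agree_on_errors) (Nat.pow_le_pow_right two_pos hkE)
    _ = 2 ^ Fintype.card ι := card_filter_forall_mem_eq_mul_two_pow E τ

open Classical in
theorem card_exists_hidesErrors_exchange_mul_two_pow_le {F : Set (X → Bool)} {d : ℕ}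
    (hVC : ∀ S : Finset X, Shatters F S → #S ≤ d) {f : X → Bool} (hf : f ∈ F) {k : ℕ}
    (hk : 0 < k) (p : (ι → X) × (ι → X)) :
    #{σ : ι → Bool | ∃ g ∈ F, HidesErrors f g k (exchange σ p)} * 2 ^ k ≤
      (2 * Fintype.card ι) ^ d * 2 ^ Fintype.card ι := by
  obtain ⟨G, hG, hrep⟩ :=
    exists_finset_card_le_pow_forall_comp_eq hVC hf (Sum.elim p.1 p.2)
  rw [Fintype.card_sum, ← two_mul] at hG
  have cover : ({σ | ∃ g ∈ F, HidesErrors f g k (exchange σ p)} : Finset (ι → Bool)) ⊆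
      G.biUnion fun g => {σ | HidesErrors f g k (exchange σ p)} := by
    intro σ hσ
    obtain ⟨g, hg, hσg⟩ := (mem_filter.1 hσ).2
    have hne : g ∘ Sum.elim p.1 p.2 ≠ f ∘ Sum.elim p.1 p.2 := fun h =>
      not_hidesErrors_self f hk _ ((hidesErrors_exchange_congr h σ).1 hσg)
    obtain ⟨g', hg', hgg'⟩ := hrep g hg hne
    exact mem_biUnion.2
      ⟨g', hg', mem_filter.2 ⟨mem_univ σ, (hidesErrors_exchange_congr hgg' σ).1 hσg⟩⟩
  calc _ ≤ (∑ g ∈ G, #{σ : ι → Bool | HidesErrors f g k (exchange σ p)}) * 2 ^ k :=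
        Nat.mul_le_mul_right _ ((card_le_card cover).trans card_biUnion_le)
    _ = ∑ g ∈ G, #{σ : ι → Bool | HidesErrors f g k (exchange σ p)} * 2 ^ k := sum_mul _ _ _
    _ ≤ #G * 2 ^ Fintype.card ι :=
      sum_le_card_nsmul _ _ _ fun g _ => card_hidesErrors_exchange_mul_two_pow_le f g k p
    _ ≤ _ := Nat.mul_le_mul_right _ hG

end Exchange

section Symmetrization

variable {Ω κ : Type*} [MeasurableSpace Ω] {μ : Measure Ω} [Fintype κ] [Nonempty κ]
  {T : κ → Ω → Ω} {s : Set Ω} {r : ENNReal}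

open Classical in
theorem measure_le_mul_of_forall_card_le (hT : ∀ σ, MeasurePreserving (T σ) μ μ)
    (hs : MeasurableSet s) (h : ∀ ω, (#{σ | T σ ω ∈ s} : ENNReal) ≤ r * Fintype.card κ) :
    μ s ≤ r * μ Set.univ := by
  have card_eq_sum (ω : Ω) :
      (#{σ | T σ ω ∈ s} : ENNReal) = ∑ σ, (T σ ⁻¹' s).indicator 1 ω := by
    simp [Set.indicator_apply]
  have double_count : Fintype.card κ * μ s = ∫⁻ ω, #{σ | T σ ω ∈ s} ∂μ := by
    simp_rw [card_eq_sum]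
    rw [lintegral_finsetSum _ fun σ _ => measurable_one.indicator ((hT σ).measurable hs)]
    simp [lintegral_indicator_one ((hT _).measurable hs), (hT _).measure_preimage
      hs.nullMeasurableSet]
  have card_mul_le : Fintype.card κ * μ s ≤ Fintype.card κ * (r * μ Set.univ) :=
    calc _ = ∫⁻ ω, #{σ | T σ ω ∈ s} ∂μ := double_count
      _ ≤ ∫⁻ _, r * Fintype.card κ ∂μ := lintegral_mono h
      _ = _ := by rw [lintegral_const]; ring
  exact (ENNReal.mul_le_mul_iff_right (by simp) (by simp)).1 card_mul_le

open Classical in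
-- `s` need not be measurable: the averaging is done over the complement of a measurable hull.
theorem one_sub_le_measure_of_forall_card_notMem_le [IsProbabilityMeasure μ]
    (hT : ∀ σ, MeasurePreserving (T σ) μ μ)
    (h : ∀ ω, (#{σ | T σ ω ∉ s} : ENNReal) ≤ r * Fintype.card κ) : 1 - r ≤ μ s := by
  have hhull := measurableSet_toMeasurable μ s
  have compl_le : μ (toMeasurable μ s)ᶜ ≤ r * μ Set.univ := by
    refine measure_le_mul_of_forall_card_le hT hhull.compl fun ω => le_trans ?_ (h ω)
    gcongr with σ
    exact fun hσ hs => hσ (subset_toMeasurable μ s hs)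
  rw [measure_univ, mul_one] at compl_le
  calc 1 - r ≤ 1 - μ (toMeasurable μ s)ᶜ := tsub_le_tsub_left compl_le 1
    _ = μ s := by rw [← prob_compl_eq_one_sub hhull.compl, compl_compl, measure_toMeasurable]

end Symmetrization

theorem one_sub_le_measure_forall_not_hidesErrors {X ι : Type*} [Fintype ι] [MeasurableSpace X]
    (P : Measure X) [IsProbabilityMeasure P] {F : Set (X → Bool)} {d : ℕ}
    (hVC : ∀ S : Finset X, Shatters F S → #S ≤ d) {f : X → Bool} (hf : f ∈ F) {k : ℕ}
    (hk : 0 < k) :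
    1 - (2 * Fintype.card ι : ENNReal) ^ d / 2 ^ k ≤
      ((Measure.pi fun _ : ι => P).prod (Measure.pi fun _ : ι => P))
        {p | ∀ g ∈ F, ¬ HidesErrors f g k p} := by
  classical
  refine one_sub_le_measure_of_forall_card_notMem_le (measurePreserving_exchange P) fun p => ?_
  have count := card_exists_hidesErrors_exchange_mul_two_pow_le hVC hf hk p
  rw [← ENNReal.mul_div_right_comm, ENNReal.le_div_iff_mul_le (by simp) (by simp)]
  simpa using mod_cast count

theorem sum_loss01_eq_card_errorSet {X ι : Type*} [Fintype ι] (f g : X → Bool) (z : ι → X) :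
    ∑ i, loss01 (g (z i)) (f (z i)) = #(errorSet f g z) := by
  simp [errorSet, loss01, card_filter, ite_not]

-- Error counts are integers, so the strict bound survives the supremum.
theorem worstLoss01_lt_div {X : Type*} {n : ℕ} (hn : 0 < n) {z : Fin n → X} {V : Set (X → Bool)}
    {f : X → Bool} {K : ℝ} (hK : 0 < K) (h : ∀ g ∈ V, (#(errorSet f g z) : ℝ) < K) :
    worstLoss01 z V f < K / n := by
  have ceil_pos : 0 < ⌈K⌉₊ := Nat.ceil_pos.2 hK
  have pred_ceil_lt : ((⌈K⌉₊ - 1 : ℕ) : ℝ) < K := Nat.lt_ceil.1 (by omega)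
  have loss_le : worstLoss01 z V f ≤ ((⌈K⌉₊ - 1 : ℕ) : ℝ) / n := by
    refine Real.iSup_le (fun g => Real.iSup_le (fun hg => ?_) (by positivity)) (by positivity)
    have card_le : #(errorSet f g z) ≤ ⌈K⌉₊ - 1 := Nat.le_pred_of_lt (Nat.lt_ceil.2 (h g hg))
    rw [sum_loss01_eq_card_errorSet, one_div_mul_eq_div]
    gcongr
  exact loss_le.trans_lt (by gcongr)

theorem pow_div_two_pow_ceil_logb_le {a δ : ℝ} (ha : 0 < a) (hδ : 0 < δ) (d : ℕ) :
    a ^ d / 2 ^ ⌈d * Real.logb 2 a + Real.logb 2 (1 / δ)⌉₊ ≤ δ := by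
  set K := d * Real.logb 2 a + Real.logb 2 (1 / δ) with hK
  have two_rpow : (2 : ℝ) ^ K = a ^ d / δ := by
    rw [hK, ← Real.logb_pow, ← Real.logb_mul (by positivity) (by positivity),
      Real.rpow_logb (by norm_num) (by norm_num) (by positivity), mul_one_div]
  have rpow_le : (2 : ℝ) ^ K ≤ 2 ^ ⌈K⌉₊ := by
    rw [← Real.rpow_natCast]
    exact Real.rpow_le_rpow_of_exponent_le one_le_two (Nat.le_ceil K)
  rw [two_rpow, div_le_iff₀ hδ] at rpow_le
  rwa [div_le_iff₀' (by positivity)]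

/-- The probability is that of the outer measure when the event is not measurable. -/
theorem stmt_4_general {X : Type*} [MeasurableSpace X] (F : Set (X → Bool)) (d : ℕ)
    (hVC : ∀ S : Finset X, Shatters F S → S.card ≤ d) (f : X → Bool) (hf : f ∈ F)
    (P : Measure X) [IsProbabilityMeasure P] {n : ℕ} (hn : 0 < n) (δ : ℝ) (hδ : 0 < δ) :
    ENNReal.ofReal (1 - δ) ≤
      ((Measure.pi fun _ : Fin n => P).prod (Measure.pi fun _ : Fin n => P))
        {p : (Fin n → X) × (Fin n → X) |
          worstLoss01 p.2 (VS F p.1 fun i => f (p.1 i)) f <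
            ((d : ℝ) * Real.logb 2 (2 * n) + Real.logb 2 (1 / δ)) / n} := by
  rcases le_or_gt 1 δ with hδ1 | hδ1
  · simp [ENNReal.ofReal_of_nonpos (sub_nonpos.2 hδ1)]
  have hn1 : (1 : ℝ) ≤ n := mod_cast hn
  have hfail := pow_div_two_pow_ceil_logb_le (a := 2 * n) (by positivity) hδ d
  have hK : 0 < (d : ℝ) * Real.logb 2 (2 * n) + Real.logb 2 (1 / δ) :=
    add_pos_of_nonneg_of_pos
      (mul_nonneg d.cast_nonneg (Real.logb_nonneg one_lt_two (by linarith)))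
      (Real.logb_pos one_lt_two (one_lt_one_div hδ hδ1))
  set K := (d : ℝ) * Real.logb 2 (2 * n) + Real.logb 2 (1 / δ)
  calc ENNReal.ofReal (1 - δ) = 1 - ENNReal.ofReal δ := by
        rw [ENNReal.ofReal_sub _ hδ.le, ENNReal.ofReal_one]
    _ ≤ 1 - (2 * Fintype.card (Fin n) : ENNReal) ^ d / 2 ^ ⌈K⌉₊ := by
      gcongr
      simpa [ENNReal.ofReal_div_of_pos, ENNReal.ofReal_pow, ENNReal.ofReal_mul]
        using ENNReal.ofReal_le_ofReal hfail
    _ ≤ _ := one_sub_le_measure_forall_not_hidesErrors P hVC hf (Nat.ceil_pos.2 hK)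
    _ ≤ _ := measure_mono fun p hp => worstLoss01_lt_div hn hK fun g hg =>
      Nat.lt_ceil.1 (not_le.1 fun hle => hp g hg.1 ⟨hg.2, hle⟩)

theorem stmt_4 {X : Type*} [Countable X] [MeasurableSpace X] [DiscreteMeasurableSpace X]
    (F : Set (X → Bool)) (d : ℕ)
    (hVC : ∀ S : Finset X, Shatters F S → S.card ≤ d)
    (f : X → Bool) (hf : f ∈ F)
    (P : PMF X) {n : ℕ} (hn : 0 < n) (δ : ℝ) (hδ : δ ∈ Set.Ioc (0 : ℝ) 1) :
    ENNReal.ofReal (1 - δ) ≤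
      ((Measure.pi fun _ : Fin n => P.toMeasure).prod
          (Measure.pi fun _ : Fin n => P.toMeasure))
        {p : (Fin n → X) × (Fin n → X) |
          worstLoss01 p.2 (VS F p.1 fun i => f (p.1 i)) f <
            ((d : ℝ) * Real.logb 2 (2 * n) + Real.logb 2 (1 / δ)) / n} :=
  stmt_4_general F d hVC f hf P.toMeasure hn δ hδ.1
end

section
/- Let f, h : X → Y, let Q be a probability distribution on the countable set X, and let a : X^n → [0,1]^n be any transductive abstainer (a function assigning each test sequence a vector of abstention probabilities). Then E_{x ~ Q^n, i uniform in {1,…,n}}[ ℓ_Q(f, h, r_i) ] = E_{x ~ Q^n}[ ℓ_x(f, h, a(x)) ], where for each x ∈ X^n and i, the abstainer r_i : X → [0,1] is defined by r_i(x') := a_i(x_1, …, x_{i−1}, x', x_{i+1}, …, x_n) (the i-th coordinate of a evaluated on x with its i-th entry replaced by x'). -/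
open Finset MeasureTheory

/-- Selective test loss with fractional abstention vector `a`. -/
noncomputable def selLossFrac {X Y : Type*} (ℓ : Y → Y → ℝ) (c : ℝ) {n : ℕ}
    (x : Fin n → X) (f h : X → Y) (a : Fin n → ℝ) : ℝ :=
  (1 / (n : ℝ)) * ∑ i, (c * a i + (1 - a i) * ℓ (f (x i)) (h (x i)))

/-- Generalization loss of predictor `h` with abstainer `r` on distribution `Q`. -/
noncomputable def genLoss {X Y : Type*} [MeasurableSpace X] (ℓ : Y → Y → ℝ) (c : ℝ)
    (Q : PMF X) (f h : X → Y) (r : X → ℝ) : ℝ :=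
  ∫ t, (c * r t + (1 - r t) * ℓ (f t) (h t)) ∂Q.toMeasure

/-!
For a fixed coordinate `i`, replacing the `i`-th entry of `x ~ Qⁿ` by an independent draw `x' ~ Q`
leaves the law `Qⁿ` unchanged. The `i`-th summand of the selective test loss, evaluated at the
resampled sequence, is the integrand of the generalization loss of `r_i` at `x'`; so by Fubini both
have the same expectation, and averaging over `i` gives the identity.
-/

section Resampling

variable {ι : Type*} [Fintype ι] [DecidableEq ι] {X : ι → Type*} [∀ j, MeasurableSpace (X j)]
  (μ : ∀ j, Measure (X j)) [∀ j, SigmaFinite (μ j)] (i : ι) [IsProbabilityMeasure (μ i)]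

theorem measurePreserving_update_pi :
    MeasurePreserving (fun p : (∀ j, X j) × X i ↦ Function.update p.1 i p.2)
      ((Measure.pi μ).prod (μ i)) (Measure.pi μ) := by
  refine ⟨measurable_update', (Measure.pi_eq fun s hs ↦ ?_).symm⟩
  have preimage_box : (fun p : (∀ j, X j) × X i ↦ Function.update p.1 i p.2) ⁻¹' Set.univ.pi s =
      Set.univ.pi (Function.update s i Set.univ) ×ˢ s i := by
    ext ⟨x, t⟩
    simp only [Set.mem_preimage, Set.mem_prod, Set.mem_univ_pi]
    rw [Function.forall_update_iff x (p := fun j y ↦ y ∈ s j),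
      Function.forall_update_iff s (p := fun j u ↦ x j ∈ u)]
    simp only [Set.mem_univ, true_and, and_comm]
  calc Measure.map _ ((Measure.pi μ).prod (μ i)) (Set.univ.pi s)
      = (∏ j, μ j (Function.update s i Set.univ j)) * μ i (s i) := by
        rw [Measure.map_apply measurable_update' (.univ_pi hs), preimage_box, Measure.prod_prod,
          Measure.pi_pi]
    _ = (∏ j ∈ univ \ {i}, μ j (s j)) * μ i (s i) := by
        simp only [Function.apply_update (fun j ↦ μ j), prod_update_of_mem (mem_univ i),
          measure_univ, one_mul]
    _ = ∏ j, μ j (s j) := by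
        rw [sdiff_singleton_eq_erase, prod_erase_mul _ _ (mem_univ i)]

theorem integral_pi_eq_integral_integral_update {E : Type*} [NormedAddCommGroup E]
    [NormedSpace ℝ E] {g : (∀ j, X j) → E} (hg : Integrable g (Measure.pi μ)) :
    ∫ x, g x ∂Measure.pi μ = ∫ x, ∫ t, g (Function.update x i t) ∂μ i ∂Measure.pi μ := by
  have update_preserves := measurePreserving_update_pi μ i
  calc ∫ x, g x ∂Measure.pi μ
      = ∫ p, g (Function.update p.1 i p.2) ∂(Measure.pi μ).prod (μ i) := by
        conv_lhs => rw [← update_preserves.map_eq]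
        exact integral_map update_preserves.aemeasurable
          (update_preserves.map_eq.symm ▸ hg.aestronglyMeasurable)
    _ = ∫ x, ∫ t, g (Function.update x i t) ∂μ i ∂Measure.pi μ :=
        integral_prod _ (update_preserves.integrable_comp_of_integrable hg)

end Resampling

theorem mul_add_one_sub_mul_mem_of_convex {s : Set ℝ} (hs : Convex ℝ s) {c l r : ℝ} (hc : c ∈ s)
    (hl : l ∈ s) (hr : r ∈ Set.Icc (0 : ℝ) 1) : c * r + (1 - r) * l ∈ s := by
  simpa only [smul_eq_mul, mul_comm c] using
    hs hc hl hr.1 (sub_nonneg.2 hr.2) (add_sub_cancel r 1)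

theorem stmt_10_general {X Y : Type*} [MeasurableSpace X] (ℓ : Y → Y → ℝ) (c : ℝ) {n : ℕ}
    (f h : X → Y) (Q : PMF X) (a : (Fin n → X) → Fin n → ℝ)
    (h_int : ∀ i, Integrable (fun x ↦ c * a x i + (1 - a x i) * ℓ (f (x i)) (h (x i)))
      (Measure.pi fun _ ↦ Q.toMeasure)) :
    (1 / (n : ℝ)) * ∑ i : Fin n,
        ∫ x : Fin n → X, genLoss ℓ c Q f h (fun x' ↦ a (Function.update x i x') i)
          ∂(Measure.pi fun _ ↦ Q.toMeasure) =
      ∫ x : Fin n → X, selLossFrac ℓ c x f h (a x) ∂(Measure.pi fun _ ↦ Q.toMeasure) := by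
  have resample_coordinate (i : Fin n) :
      ∫ x : Fin n → X, genLoss ℓ c Q f h (fun x' ↦ a (Function.update x i x') i)
          ∂(Measure.pi fun _ ↦ Q.toMeasure) =
        ∫ x, (c * a x i + (1 - a x i) * ℓ (f (x i)) (h (x i)))
          ∂(Measure.pi fun _ ↦ Q.toMeasure) := by
    simpa only [genLoss, Function.update_self] using
      (integral_pi_eq_integral_integral_update (fun _ ↦ Q.toMeasure) i (h_int i)).symm
  simp only [resample_coordinate, selLossFrac]
  rw [integral_const_mul, integral_finsetSum _ fun i _ ↦ h_int i]

theorem stmt_10 {X Y : Type*} [Countable X] [MeasurableSpace X] [DiscreteMeasurableSpace X]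
    (ℓ : Y → Y → ℝ) (hℓ : ∀ y y', ℓ y y' ∈ Set.Icc (0 : ℝ) 1)
    (c : ℝ) (hc : c ∈ Set.Ioc (0 : ℝ) 1) {n : ℕ} (hn : 0 < n)
    (f h : X → Y) (Q : PMF X)
    (a : (Fin n → X) → Fin n → ℝ)
    (ha01 : ∀ x i, a x i ∈ Set.Icc (0 : ℝ) 1) :
    (1 / (n : ℝ)) * ∑ i : Fin n,
        ∫ x : Fin n → X,
          genLoss ℓ c Q f h (fun x' => a (Function.update x i x') i)
          ∂(Measure.pi fun _ => Q.toMeasure) =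
      ∫ x : Fin n → X, selLossFrac ℓ c x f h (a x)
        ∂(Measure.pi fun _ => Q.toMeasure) :=
  stmt_10_general ℓ c f h Q a fun i ↦ .of_mem_Icc 0 1 Measurable.of_discrete.aemeasurable <|
    .of_forall fun x ↦ mul_add_one_sub_mul_mem_of_convex (convex_Icc 0 1)
      (Set.Ioc_subset_Icc_self hc) (hℓ _ _) (ha01 x i)
end

section
/- Let X = {1, 2}, let F be the set of all four functions from {1,2} to {0,1}, let P be the point mass at 1, let Q be uniform on {1,2} (so |P−Q|_TV = 1/2), and let μ be the uniform distribution over F. There exists a constant κ > 0 such that for every c ∈ (0, 1/2), every n ≥ 4, and every (possibly randomized) transductive selective classification algorithm L mapping (x̄, f(x̄), x) to a pair (h, a) with h : X → {0,1} and a ∈ [0,1]^n: Pr_{f ~ μ, x̄ ~ P^n, x ~ Q^n}[ ℓ_x(f, h, a) ≥ c·|P−Q|_TV + c/√n ] ≥ κ. -/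
open Finset MeasureTheory

/-- Selective test loss with fractional abstention vector `a` (0-1 base loss). -/
noncomputable def selLossFrac01 {X : Type*} (c : ℝ) {n : ℕ}
    (x : Fin n → X) (f h : X → Bool) (a : Fin n → ℝ) : ℝ :=
  (1 / (n : ℝ)) * ∑ i, (c * a i + (1 - a i) * loss01 (f (x i)) (h (x i)))

/-! The learner never sees the label of the point `y` missed by `P`, so for one of its two possible
values the hypothesis errs on every copy of `y` in the test sample, and abstaining on such an error
can only reduce its cost from `1` to `c`. Flipping the label of `y` preserves the uniform prior,
hence `Pr(N ≥ k) ≤ 2 * Pr(loss ≥ c * k / n)`, where `N ∼ Bin(n, q)` with `q = Q {y}` counts the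
copies of `y`. By the central limit theorem the probability of `N ≥ n * q + b * √n` is bounded away
from `0` for large `n`, and for each remaining `n` with `n * q + b * √n ≤ n` this event contains
`N = n`. -/

section BinomialDeviation

open ProbabilityTheory Filter
open scoped ENNReal

variable {Ω E : Type*} [MeasurableSpace Ω] [MeasurableSpace E]

theorem gaussianReal_Ioi_pos (m : ℝ) {v : NNReal} (hv : v ≠ 0) (b : ℝ) :
    0 < gaussianReal m v (Set.Ioi b) := by
  rw [pos_iff_ne_zero]
  intro hzero
  simpa using gaussianReal_absolutelyContinuous' m hv hzero

theorem liminf_measure_add_mul_sqrt_le_sum_pos {P : Measure Ω} [IsProbabilityMeasure P]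
    {Z : ℕ → Ω → ℝ} (hZ : MemLp (Z 0) 2 P) (hvar : Var[Z 0; P] ≠ 0) (hindep : iIndepFun Z P)
    (hident : ∀ i, IdentDistrib (Z i) (Z 0) P P) (b : ℝ) :
    0 < liminf (fun n : ℕ ↦ P {ω | n * P[Z 0] + b * √n ≤ ∑ k ∈ range n, Z k ω}) atTop := by
  have hclt := tendstoInDistribution_inv_sqrt_mul_sum_sub
    (HasLaw.id (μ := gaussianReal 0 Var[Z 0; P].toNNReal)) hZ hindep hident
  have hv : Var[Z 0; P].toNNReal ≠ 0 := by
    simpa using (variance_nonneg (Z 0) P).lt_of_ne' hvar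
  calc 0 < gaussianReal 0 Var[Z 0; P].toNNReal (Set.Ioi b) := gaussianReal_Ioi_pos 0 hv b
    _ ≤ liminf (fun n : ℕ ↦
          P.map (fun ω ↦ (√n)⁻¹ * (∑ k ∈ range n, Z k ω - n * P[Z 0])) (Set.Ioi b)) atTop := by
      simpa using ProbabilityMeasure.le_liminf_measure_open_of_tendsto hclt.tendsto isOpen_Ioi
    _ ≤ liminf (fun n : ℕ ↦ P {ω | n * P[Z 0] + b * √n ≤ ∑ k ∈ range n, Z k ω}) atTop := by
      refine liminf_le_liminf ?_
      filter_upwards [eventually_gt_atTop 0] with n hn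
      rw [Measure.map_apply_of_aemeasurable (hclt.forall_aemeasurable n) measurableSet_Ioi]
      refine measure_mono fun ω hω ↦ ?_
      have hsqrt : 0 < √(n : ℝ) := by positivity
      have hdev : b * √n < ∑ k ∈ range n, Z k ω - n * P[Z 0] := by
        rwa [Set.mem_preimage, Set.mem_Ioi, ← div_eq_inv_mul, lt_div_iff₀ hsqrt] at hω
      simp only [Set.mem_ofPred_eq]
      linarith

theorem exists_pos_forall_le_of_liminf_pos {u : ℕ → ℝ≥0∞} {p : ℕ → Prop}
    (hlim : 0 < liminf u atTop) (hpos : ∀ n, p n → 0 < u n) :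
    ∃ κ : ℝ, 0 < κ ∧ ∀ n, p n → ENNReal.ofReal κ ≤ u n := by
  classical
  obtain ⟨ε, hε, hεlim⟩ := exists_between hlim
  obtain ⟨N, hN⟩ := eventually_atTop.1 (eventually_lt_of_lt_liminf hεlim)
  set δ := ((range N).filter p).inf u
  have hδ : 0 < δ := by
    simpa [δ, Finset.lt_inf_iff] using fun n _ ↦ hpos n
  obtain ⟨κ, -, hκ, hκle⟩ := ENNReal.lt_iff_exists_real_btwn.1 (lt_min hε hδ)
  refine ⟨κ, ENNReal.ofReal_pos.1 hκ, fun n hn ↦ ?_⟩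
  rcases lt_or_ge n N with hlt | hge
  · exact (hκle.le.trans (min_le_right _ _)).trans
      (Finset.inf_le (mem_filter.2 ⟨mem_range.2 hlt, hn⟩))
  · exact (hκle.le.trans (min_le_left _ _)).trans (hN n hge).le

theorem variance_indicator_one {ν : Measure E} [IsProbabilityMeasure ν] {A : Set E}
    (hA : MeasurableSet A) : Var[A.indicator 1; ν] = ν.real A * (1 - ν.real A) := by
  rw [variance_of_ae_eq_zero_or_one (measurable_one.indicator hA).aemeasurable
    (ae_of_all _ fun x ↦ Set.indicator_eq_zero_or_self A 1 x), ← probReal_compl_eq_one_sub hA,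
    mul_comm]
  congr 2 <;> ext x <;> simp [Set.indicator_eq_one_iff_mem]

theorem liminf_pi_add_mul_sqrt_le_card_pos (ν : Measure E) [IsProbabilityMeasure ν] {A : Set E}
    [DecidablePred (· ∈ A)] (hA : MeasurableSet A) (hA₀ : ν A ≠ 0) (hA₁ : ν A ≠ 1) (b : ℝ) :
    0 < liminf (fun n : ℕ ↦ Measure.pi (fun _ : Fin n ↦ ν)
      {x | n * ν.real A + b * √n ≤ #{i | x i ∈ A}}) atTop := by
  obtain ⟨Ω, _, P, Y, hYmeas, hYlaw, hYindep, _⟩ := exists_iid ℕ ν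
  set g : E → ℝ := A.indicator 1
  have hg : Measurable g := measurable_one.indicator hA
  have hmem : MemLp (g ∘ Y 0) 2 P :=
    (memLp_indicator_const 2 hA 1 (.inr (measure_ne_top ν A))).comp_measurePreserving
      ((hYlaw 0).measurePreserving (hYmeas 0))
  have hmean : P[g ∘ Y 0] = ν.real A := by
    rw [(hYlaw 0).integral_comp hg.aestronglyMeasurable]
    exact integral_indicator_one hA
  have hvar : Var[g ∘ Y 0; P] ≠ 0 := by
    rw [← variance_map hg.aemeasurable (hYlaw 0).aemeasurable, (hYlaw 0).map_eq,
      variance_indicator_one hA]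
    exact mul_ne_zero (measureReal_ne_zero_iff (measure_ne_top ν A) |>.2 hA₀)
      (sub_ne_zero.2 (ENNReal.toReal_ne_one.2 hA₁).symm)
  have hlim := liminf_measure_add_mul_sqrt_le_sum_pos (Z := fun k ↦ g ∘ Y k) hmem hvar
    (hYindep.comp (fun _ ↦ g) fun _ ↦ hg)
    (fun i ↦ ((hYlaw i).identDistrib (hYlaw 0)).comp hg) b
  simp only [hmean] at hlim
  convert hlim using 3 with n
  have hlaw : HasLaw (fun ω (i : Fin n) ↦ Y i ω) (Measure.pi fun _ ↦ ν) P :=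
    (hYindep.precomp Fin.val_injective).hasLaw_pi fun i ↦ hYlaw i
  have hcard (x : Fin n → E) : (#{i | x i ∈ A} : ℝ) = ∑ i, g (x i) := by
    simp [g, Set.indicator_apply]
  simp only [hcard, sum_range, Function.comp_apply]
  exact (hlaw.measure_eq (measurableSet_le measurable_const (by fun_prop))).symm

theorem exists_pos_le_pi_add_mul_sqrt_le_card (ν : Measure E) [IsProbabilityMeasure ν] {A : Set E}
    [DecidablePred (· ∈ A)] (hA : MeasurableSet A) (hA₀ : ν A ≠ 0) (hA₁ : ν A ≠ 1) (b : ℝ) :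
    ∃ κ : ℝ, 0 < κ ∧ ∀ n : ℕ, n * ν.real A + b * √n ≤ n →
      ENNReal.ofReal κ ≤ Measure.pi (fun _ : Fin n ↦ ν)
        {x | n * ν.real A + b * √n ≤ #{i | x i ∈ A}} := by
  refine exists_pos_forall_le_of_liminf_pos (liminf_pi_add_mul_sqrt_le_card_pos ν hA hA₀ hA₁ b) ?_
  intro n hn
  calc 0 < ν A ^ n := pos_iff_ne_zero.2 (pow_ne_zero n hA₀)
    _ = Measure.pi (fun _ : Fin n ↦ ν) (Set.univ.pi fun _ ↦ A) := by simp [Measure.pi_pi]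
    _ ≤ _ := by
      refine measure_mono fun x hx ↦ ?_
      have hall : ∀ i, x i ∈ A := fun i ↦ hx i trivial
      simpa [hall] using hn

end BinomialDeviation

theorem measurePreserving_uniformOfFintype {X : Type*} [Fintype X] [Nonempty X]
    [MeasurableSpace X] [DiscreteMeasurableSpace X] (e : X ≃ X) :
    MeasurePreserving e (PMF.uniformOfFintype X).toMeasure (PMF.uniformOfFintype X).toMeasure := by
  refine ⟨.of_discrete, Measure.ext_of_singleton fun x ↦ ?_⟩
  have hpre : e ⁻¹' {x} = {e.symm x} := by
    ext x'
    simp [Equiv.eq_symm_apply]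
  rw [Measure.map_apply .of_discrete .of_discrete, hpre]
  simp [PMF.toMeasure_apply_singleton _ _ .of_discrete]

theorem measure_le_two_mul_of_subset_union_preimage {Ω : Type*} [MeasurableSpace Ω]
    {μ : Measure Ω} {φ : Ω → Ω} (hφ : MeasurePreserving φ μ μ) {A E : Set Ω}
    (hA : A ⊆ E ∪ φ ⁻¹' E) :
    μ A ≤ 2 * μ E :=
  calc μ A ≤ μ E + μ (φ ⁻¹' E) := (measure_mono hA).trans (measure_union_le _ _)
    _ ≤ μ E + μ E :=
      add_le_add le_rfl ((Measure.le_map_apply hφ.aemeasurable E).trans_eq (by rw [hφ.map_eq]))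
    _ = 2 * μ E := (two_mul _).symm

section LabelFlip

variable {X : Type*} [DecidableEq X]

/-- The labelling `f` with the label of `y` flipped: the involution of the set of target functions
that a learner who never sees `y` cannot detect. -/
def flipLabel (y : X) (f : X → Bool) : X → Bool :=
  Function.update f y (!f y)

theorem flipLabel_apply_self (y : X) (f : X → Bool) : flipLabel y f y = !f y :=
  Function.update_self ..

theorem flipLabel_apply_of_ne {x y : X} (h : x ≠ y) (f : X → Bool) :
    flipLabel y f x = f x :=
  Function.update_of_ne h ..

theorem flipLabel_involutive (y : X) : Function.Involutive (flipLabel y) := by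
  intro f
  simp [flipLabel]

end LabelFlip

section LowerBound

theorem add_div_sqrt_le_div {q b r k : ℝ} (hr : 0 < r) (hk : r * q + b * √r ≤ k) :
    q + b / √r ≤ k / r :=
  calc q + b / √r = (r * q + b * √r) / r := by
        rw [add_div, mul_div_cancel_left₀ q hr.ne', mul_div_assoc, Real.sqrt_div_self', mul_one_div]
    _ ≤ k / r := by gcongr

variable {X Ω : Type*} {c : ℝ} {m n : ℕ}

theorem mul_loss01_le {a : ℝ} (hc : c ∈ Set.Icc 0 1) (ha : a ∈ Set.Icc 0 1) (y y' : Bool) :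
    c * loss01 y y' ≤ c * a + (1 - a) * loss01 y y' := by
  rcases eq_or_ne y y' with rfl | hne
  · simpa [loss01] using mul_nonneg hc.1 ha.1
  · have hslack := mul_nonneg (sub_nonneg.2 hc.2) (sub_nonneg.2 ha.2)
    simp only [loss01, if_neg hne]
    linarith

theorem mul_card_ne_div_le_selLossFrac01 (hc : c ∈ Set.Icc 0 1) (x : Fin n → X) (f h : X → Bool)
    {a : Fin n → ℝ} (ha : ∀ i, a i ∈ Set.Icc 0 1) :
    c * (#{i | f (x i) ≠ h (x i)} / n) ≤ selLossFrac01 c x f h a :=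
  calc c * (#{i | f (x i) ≠ h (x i)} / n)
      = 1 / n * ∑ i, c * loss01 (f (x i)) (h (x i)) := by
        have hcard : ∑ i, loss01 (f (x i)) (h (x i)) = #{i | f (x i) ≠ h (x i)} := by
          simp [loss01, sum_ite]
        rw [← mul_sum, hcard]
        ring
    _ ≤ selLossFrac01 c x f h a := by
        unfold selLossFrac01
        gcongr with i
        exact mul_loss01_le hc (ha i) _ _

variable [DecidableEq X]

theorem mul_card_eq_div_le_selLossFrac01_or_flipLabel (hc : c ∈ Set.Icc 0 1) (y : X)
    (x : Fin n → X) (f h : X → Bool) {a : Fin n → ℝ} (ha : ∀ i, a i ∈ Set.Icc 0 1) :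
    c * (#{i | x i = y} / n) ≤ selLossFrac01 c x f h a ∨
      c * (#{i | x i = y} / n) ≤ selLossFrac01 c x (flipLabel y f) h a := by
  have hle (g : X → Bool) (hg : g y ≠ h y) :
      c * (#{i | x i = y} / n) ≤ selLossFrac01 c x g h a := by
    refine le_trans ?_ (mul_card_ne_div_le_selLossFrac01 hc x g h ha)
    gcongr with i
    · exact hc.1
    · rintro rfl
      exact hg
  rcases ne_or_eq (f y) (h y) with hne | heq
  · exact .inl (hle f hne)
  · exact .inr (hle _ (by simp [flipLabel_apply_self, heq]))

theorem measure_le_two_mul_measure_le_selLossFrac01 [MeasurableSpace X] [MeasurableSpace Ω]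
    (hc : c ∈ Set.Icc 0 1) {y : X} {π : Measure (X → Bool)} [IsProbabilityMeasure π]
    (hπ : MeasurePreserving (flipLabel y) π π) {τ : Measure (Fin m → X)} [IsProbabilityMeasure τ]
    (hτ : ∀ᵐ xb ∂τ, ∀ i, xb i ≠ y) (ρ : Measure (Fin n → X)) [SFinite ρ] (ω : Measure Ω)
    [IsProbabilityMeasure ω]
    {L : (Fin m → X) → (Fin m → Bool) → (Fin n → X) → Ω → (X → Bool) × (Fin n → ℝ)}
    (hL : ∀ xb yb x w i, (L xb yb x w).2 i ∈ Set.Icc 0 1) (t : ℝ) :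
    ρ {x | t ≤ c * (#{i | x i = y} / n)} ≤
      2 * (((π.prod τ).prod ρ).prod ω) {q | t ≤ selLossFrac01 c q.1.2 q.1.1.1
        (L q.1.1.2 (fun i ↦ q.1.1.1 (q.1.1.2 i)) q.1.2 q.2).1
        (L q.1.1.2 (fun i ↦ q.1.1.1 (q.1.1.2 i)) q.1.2 q.2).2} := by
  have hflip : MeasurePreserving
      (Prod.map (Prod.map (Prod.map (flipLabel y) id) id) id)
      (((π.prod τ).prod ρ).prod ω) (((π.prod τ).prod ρ).prod ω) :=
    ((hπ.prod (.id τ)).prod (.id ρ)).prod (.id ω)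
  set unseen : Set (Fin m → X) := {xb | ∀ i, xb i ≠ y}
  have hunseen : τ unseen = 1 :=
    (measure_congr (Filter.eventuallyEq_univ.2 hτ)).trans measure_univ
  calc ρ {x | t ≤ c * (#{i | x i = y} / n)}
      = (((π.prod τ).prod ρ).prod ω)
          (((Set.univ ×ˢ unseen) ×ˢ {x | t ≤ c * (#{i | x i = y} / n)}) ×ˢ Set.univ) := by
        simp [Measure.prod_prod, hunseen]
    _ ≤ _ := measure_le_two_mul_of_subset_union_preimage hflip ?_
  rintro ⟨⟨⟨f, xb⟩, x⟩, w⟩ ⟨⟨⟨-, hxb⟩, hx⟩, -⟩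
  have hlabels : (fun i ↦ flipLabel y f (xb i)) = fun i ↦ f (xb i) :=
    funext fun i ↦ flipLabel_apply_of_ne (hxb i) f
  have hloss := mul_card_eq_div_le_selLossFrac01_or_flipLabel hc y x f
    (L xb (fun i ↦ f (xb i)) x w).1 (hL xb (fun i ↦ f (xb i)) x w)
  simpa [hlabels] using hloss.imp hx.trans hx.trans

theorem stmt_11_general [MeasurableSpace X] [MeasurableSingletonClass X] {y : X}
    {π : Measure (X → Bool)} [IsProbabilityMeasure π] (hπ : MeasurePreserving (flipLabel y) π π)
    {P Q : Measure X} [IsProbabilityMeasure P] [IsProbabilityMeasure Q] (hP : P {y} = 0)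
    (hQ₀ : Q {y} ≠ 0) (hQ₁ : Q {y} ≠ 1) (b : ℝ) :
    ∃ κ : ℝ, 0 < κ ∧
      ∀ c ∈ Set.Icc (0 : ℝ) 1, ∀ m n : ℕ, 0 < n → b ≤ (1 - Q.real {y}) * √n →
      ∀ (Ω : Type*) (_ : MeasurableSpace Ω) (ω : Measure Ω), IsProbabilityMeasure ω →
      ∀ L : (Fin m → X) → (Fin m → Bool) → (Fin n → X) → Ω → (X → Bool) × (Fin n → ℝ),
        (∀ xb yb x w i, (L xb yb x w).2 i ∈ Set.Icc (0 : ℝ) 1) →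
        ENNReal.ofReal κ ≤
          (((π.prod (Measure.pi fun _ : Fin m ↦ P)).prod (Measure.pi fun _ : Fin n ↦ Q)).prod ω)
            {q | c * (Q.real {y} + b / √n) ≤
              selLossFrac01 c q.1.2 q.1.1.1
                (L q.1.1.2 (fun i ↦ q.1.1.1 (q.1.1.2 i)) q.1.2 q.2).1
                (L q.1.1.2 (fun i ↦ q.1.1.1 (q.1.1.2 i)) q.1.2 q.2).2} := by
  obtain ⟨κ, hκ, hκle⟩ := exists_pos_le_pi_add_mul_sqrt_le_card Q
    (measurableSet_singleton y) hQ₀ hQ₁ b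
  refine ⟨κ / 2, half_pos hκ, fun c hc m n hn hb Ω _ ω _ L hL ↦ ?_⟩
  have hne : ∀ᵐ x ∂P, x ≠ y := measure_eq_zero_iff_ae_notMem.1 hP
  have hunseen : ∀ᵐ xb ∂Measure.pi fun _ : Fin m ↦ P, ∀ i, xb i ≠ y :=
    Filter.eventually_all.2 fun i ↦ Measure.tendsto_eval_ae_ae.eventually (p := (· ≠ y)) hne
  have hdev : n * Q.real {y} + b * √n ≤ n := by
    have hmul := mul_le_mul_of_nonneg_right hb (Real.sqrt_nonneg n)
    rw [mul_assoc, Real.mul_self_sqrt n.cast_nonneg] at hmul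
    linarith
  rw [ENNReal.ofReal_div_of_pos two_pos, ENNReal.ofReal_ofNat]
  refine ENNReal.div_le_of_le_mul' ?_
  calc ENNReal.ofReal κ
      ≤ Measure.pi (fun _ : Fin n ↦ Q)
          {x | c * (Q.real {y} + b / √n) ≤ c * (#{i | x i = y} / n)} := by
        refine (hκle n hdev).trans (measure_mono fun x hx ↦ ?_)
        simp only [Set.mem_ofPred_eq, Set.mem_singleton_iff] at hx
        exact mul_le_mul_of_nonneg_left (add_div_sqrt_le_div (by positivity) hx) hc.1
    _ ≤ _ := measure_le_two_mul_measure_le_selLossFrac01 hc hπ hunseen _ ω hL _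

end LowerBound

/-- High-probability lower bound: with `X = {1,2}`, `F` all four binary functions on `X`,
`P` the point mass at `1`, `Q` uniform on `X` (so `|P−Q|_TV = 1/2`), and `μ` uniform on `F`,
every (possibly randomized, with seed from an arbitrary probability space `Ω`) transductive
selective classification algorithm `L` incurs loss at least `c·|P−Q|_TV + c/√n` with
probability at least `κ`. -/
theorem stmt_11 :
    ∃ κ : ℝ, 0 < κ ∧
      ∀ (c : ℝ), c ∈ Set.Ioo (0 : ℝ) (1 / 2) →
      ∀ (n : ℕ), 4 ≤ n →
      ∀ (Ω : Type) (_ : MeasurableSpace Ω) (ω : Measure Ω), IsProbabilityMeasure ω →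
      ∀ L : (Fin n → Fin 2) → (Fin n → Bool) → (Fin n → Fin 2) → Ω →
          (Fin 2 → Bool) × (Fin n → ℝ),
        (∀ xb yb x w i, (L xb yb x w).2 i ∈ Set.Icc (0 : ℝ) 1) →
        ENNReal.ofReal κ ≤
          ((((PMF.uniformOfFintype (Fin 2 → Bool)).toMeasure.prod
                  (Measure.pi fun _ : Fin n => (PMF.pure (0 : Fin 2)).toMeasure)).prod
                (Measure.pi fun _ : Fin n =>
                  (PMF.uniformOfFintype (Fin 2)).toMeasure)).prod ω)
            {q : (((Fin 2 → Bool) × (Fin n → Fin 2)) × (Fin n → Fin 2)) × Ω |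
              c * (1 / 2) + c / Real.sqrt n ≤
                selLossFrac01 c q.1.2 q.1.1.1
                  (L q.1.1.2 (fun i => q.1.1.1 (q.1.1.2 i)) q.1.2 q.2).1
                  (L q.1.1.2 (fun i => q.1.1.1 (q.1.1.2 i)) q.1.2 q.2).2} := by
  have hQ : (PMF.uniformOfFintype (Fin 2)).toMeasure {1} = 2⁻¹ := by simp
  have hQreal : (PMF.uniformOfFintype (Fin 2)).toMeasure.real {1} = 1 / 2 := by
    simp [Measure.real, hQ]
  obtain ⟨κ, hκ, hκle⟩ := stmt_11_general
    (measurePreserving_uniformOfFintype (flipLabel_involutive (1 : Fin 2)).toPerm)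
    (P := (PMF.pure 0).toMeasure) (Q := (PMF.uniformOfFintype (Fin 2)).toMeasure)
    (by simp [PMF.toMeasure_pure]) (by simp [hQ]) (by simp [hQ]) 1
  refine ⟨κ, hκ, fun c hc n hn Ω _ ω _ L hL ↦ ?_⟩
  have hsqrt : 2 ≤ √(n : ℝ) := Real.le_sqrt_of_sq_le (by norm_num; exact_mod_cast hn)
  have hbound := hκle c ⟨hc.1.le, by linarith [hc.2]⟩ n n (by omega)
    (by rw [hQreal]; linarith) Ω _ ω ‹_› L hL
  simpa only [hQreal, mul_add, mul_one_div] using hbound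
end

section
/- Let F be a class of functions X → {0,1}, let h ∈ F, x̄ ∈ X^n, ȳ := h(x̄) ∈ {0,1}^n, x ∈ X^n, and a ∈ [0,1]^n. Let ĝ ∈ F be any minimizer over g ∈ F of the weighted empirical 0-1 loss Σ_{i=1}^n 4n²·1[g(x̄_i) ≠ ȳ_i] + Σ_{i=1}^n ⌊3n(1 − a_i)⌋·1[g(x_i) ≠ 1 − h(x_i)]. Then ĝ ∈ VS(x̄, ȳ) and ℓ_x(ĝ, h, a) ≥ L_x(VS(x̄, ȳ), h, a) − 1/(3n). -/
open Finset

/-- `L_x(V,h,a) = sup_{g ∈ V} ℓ_x(g,h,a)` (0-1 base loss). -/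
noncomputable def worstSelLossFrac01 {X : Type*} (c : ℝ) {n : ℕ}
    (x : Fin n → X) (V : Set (X → Bool)) (h : X → Bool) (a : Fin n → ℝ) : ℝ :=
  ⨆ g ∈ V, selLossFrac01 c x g h a

/-- The FLIP weighted empirical error: `4n²` copies of each training example `(x̄_i, ȳ_i)`
and `⌊3n(1 − a_i)⌋` copies of each flipped test example `(x_i, 1 − h(x_i))`. -/
noncomputable def flipWeight {X : Type*} {n : ℕ} (xb : Fin n → X) (yb : Fin n → Bool)
    (x : Fin n → X) (h : X → Bool) (a : Fin n → ℝ) (g : X → Bool) : ℕ :=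
  (∑ i, 4 * n ^ 2 * (if g (xb i) = yb i then 0 else 1)) +
    ∑ i, ⌊3 * (n : ℝ) * (1 - a i)⌋₊ * (if g (x i) = !(h (x i)) then 0 else 1)

/-!
A test example carries total weight at most `3n` in the FLIP problem, so all of them together weigh
at most `3n² < 4n²`: violating one training label costs more than any consistent classifier, and a
minimizer is consistent. Among consistent classifiers the objective is `∑ ⌊3n(1 - aᵢ)⌋ (1 - lossᵢ)`,
so a minimizer maximizes `∑ ⌊3n(1 - aᵢ)⌋ lossᵢ`. Rounding the `n` weights down moves this sum by at
most `n`, and dividing by `3n · n` turns that into an error `1 / (3n)` in the selective loss.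
-/

theorem sum_mul_le_sum_mul_add_card_of_sum_floor_mul_le {ι R : Type*} [Semiring R] [LinearOrder R]
    [IsStrictOrderedRing R] [FloorSemiring R] {s : Finset ι} {w u v : ι → R}
    (hw : ∀ i ∈ s, 0 ≤ w i) (hu0 : ∀ i ∈ s, 0 ≤ u i) (hu1 : ∀ i ∈ s, u i ≤ 1)
    (hv : ∀ i ∈ s, 0 ≤ v i) (huv : ∑ i ∈ s, (⌊w i⌋₊ : R) * u i ≤ ∑ i ∈ s, (⌊w i⌋₊ : R) * v i) :
    ∑ i ∈ s, w i * u i ≤ ∑ i ∈ s, w i * v i + #s :=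
  calc ∑ i ∈ s, w i * u i
      ≤ ∑ i ∈ s, ((⌊w i⌋₊ : R) * u i + 1) := by
        refine sum_le_sum fun i hi => ?_
        calc w i * u i ≤ (⌊w i⌋₊ + 1) * u i :=
              mul_le_mul_of_nonneg_right (Nat.lt_floor_add_one _).le (hu0 i hi)
          _ = ⌊w i⌋₊ * u i + u i := by rw [add_mul, one_mul]
          _ ≤ ⌊w i⌋₊ * u i + 1 := by gcongr; exact hu1 i hi
    _ = ∑ i ∈ s, (⌊w i⌋₊ : R) * u i + #s := by simp [sum_add_distrib]
    _ ≤ ∑ i ∈ s, (⌊w i⌋₊ : R) * v i + #s := by gcongr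
    _ ≤ ∑ i ∈ s, w i * v i + #s := by
        gcongr with i hi
        · exact hv i hi
        · exact Nat.floor_le (hw i hi)

theorem loss01_nonneg (y y' : Bool) : 0 ≤ loss01 y y' := by
  unfold loss01; split_ifs <;> norm_num

theorem loss01_le_one (y y' : Bool) : loss01 y y' ≤ 1 := by
  unfold loss01; split_ifs <;> norm_num

theorem loss01_not_right (y y' : Bool) : loss01 y (!y') = 1 - loss01 y y' := by
  cases y <;> cases y' <;> simp [loss01]

section

variable {X : Type*} {n : ℕ} {F V : Set (X → Bool)} {c : ℝ} {x xb : Fin n → X} {yb : Fin n → Bool}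
  {g g' h : X → Bool} {a : Fin n → ℝ}

theorem selLossFrac01_nonneg (hc : 0 ≤ c) (ha : ∀ i, a i ∈ Set.Icc (0 : ℝ) 1) :
    0 ≤ selLossFrac01 c x g h a :=
  mul_nonneg (by positivity) <| sum_nonneg fun i _ =>
    add_nonneg (mul_nonneg hc (ha i).1) (mul_nonneg (sub_nonneg.2 (ha i).2) (loss01_nonneg _ _))

-- In `ℝ` the inner supremum of `⨆ g ∈ V` is `0` at every `g ∉ V`; hence `0 ≤ b`.
theorem worstSelLossFrac01_le {b : ℝ} (hb : 0 ≤ b) (hV : ∀ g ∈ V, selLossFrac01 c x g h a ≤ b) :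
    worstSelLossFrac01 c x V h a ≤ b :=
  Real.iSup_le (fun g => Real.iSup_le (hV g) hb) hb

theorem flipWeight_eq_of_consistent (hg : ∀ i, g (xb i) = yb i) :
    flipWeight xb yb x h a g =
      ∑ i, ⌊3 * (n : ℝ) * (1 - a i)⌋₊ * (if g (x i) = !(h (x i)) then 0 else 1) := by
  simp [flipWeight, hg]

theorem cast_flipWeight_of_consistent (hg : ∀ i, g (xb i) = yb i) :
    (flipWeight xb yb x h a g : ℝ) =
      ∑ i, (⌊3 * (n : ℝ) * (1 - a i)⌋₊ : ℝ) * (1 - loss01 (g (x i)) (h (x i))) := by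
  rw [flipWeight_eq_of_consistent hg]
  simp only [← loss01_not_right]
  simp [loss01]

theorem flipWeight_le_of_consistent (ha : ∀ i, 0 ≤ a i) (hg : ∀ i, g (xb i) = yb i) :
    flipWeight xb yb x h a g ≤ 3 * n ^ 2 := by
  have floor_le (i : Fin n) : ⌊3 * (n : ℝ) * (1 - a i)⌋₊ ≤ 3 * n := by
    refine Nat.floor_le_of_le ?_
    push_cast
    exact mul_le_of_le_one_right (by positivity) (sub_le_self 1 (ha i))
  calc flipWeight xb yb x h a g
      = ∑ i, ⌊3 * (n : ℝ) * (1 - a i)⌋₊ * (if g (x i) = !(h (x i)) then 0 else 1) :=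
        flipWeight_eq_of_consistent hg
    _ ≤ ∑ _i : Fin n, 3 * n * 1 := by
        gcongr with i
        · exact floor_le i
        · split_ifs <;> simp
    _ = 3 * n ^ 2 := by simp; ring

theorem le_flipWeight_of_ne {i : Fin n} (hi : g (xb i) ≠ yb i) :
    4 * n ^ 2 ≤ flipWeight xb yb x h a g :=
  calc 4 * n ^ 2 = 4 * n ^ 2 * (if g (xb i) = yb i then 0 else 1) := by simp [hi]
    _ ≤ ∑ j, 4 * n ^ 2 * (if g (xb j) = yb j then 0 else 1) :=
        single_le_sum (f := fun j => 4 * n ^ 2 * (if g (xb j) = yb j then 0 else 1))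
          (fun _ _ => Nat.zero_le _) (mem_univ i)
    _ ≤ flipWeight xb yb x h a g := Nat.le_add_right _ _

theorem mem_VS_of_flipWeight_le (ha : ∀ i, 0 ≤ a i) (hg : g ∈ VS F xb yb) (hg' : g' ∈ F)
    (hle : flipWeight xb yb x h a g' ≤ flipWeight xb yb x h a g) : g' ∈ VS F xb yb := by
  refine ⟨hg', fun i => ?_⟩
  by_contra hi
  have hn : 0 < n ^ 2 := pow_pos i.pos 2
  have hcost : 4 * n ^ 2 ≤ 3 * n ^ 2 :=
    (le_flipWeight_of_ne hi).trans (hle.trans (flipWeight_le_of_consistent ha hg.2))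
  omega

theorem sum_floor_mul_loss01_le_of_flipWeight_le (hg : ∀ i, g (xb i) = yb i)
    (hg' : ∀ i, g' (xb i) = yb i)
    (hle : flipWeight xb yb x h a g' ≤ flipWeight xb yb x h a g) :
    ∑ i, (⌊3 * (n : ℝ) * (1 - a i)⌋₊ : ℝ) * loss01 (g (x i)) (h (x i)) ≤
      ∑ i, (⌊3 * (n : ℝ) * (1 - a i)⌋₊ : ℝ) * loss01 (g' (x i)) (h (x i)) := by
  rw [← Nat.cast_le (α := ℝ), cast_flipWeight_of_consistent hg,
    cast_flipWeight_of_consistent hg'] at hle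
  simpa only [mul_sub, mul_one, sum_sub_distrib, sub_le_sub_iff_left] using hle

theorem selLossFrac01_le_of_flipWeight_le (hn : 0 < n) (ha : ∀ i, a i ≤ 1)
    (hg : ∀ i, g (xb i) = yb i) (hg' : ∀ i, g' (xb i) = yb i)
    (hle : flipWeight xb yb x h a g' ≤ flipWeight xb yb x h a g) :
    selLossFrac01 c x g h a ≤ selLossFrac01 c x g' h a + 1 / (3 * n) := by
  have weighted_le : ∑ i, 3 * (n : ℝ) * (1 - a i) * loss01 (g (x i)) (h (x i)) ≤
      ∑ i, 3 * (n : ℝ) * (1 - a i) * loss01 (g' (x i)) (h (x i)) + n := by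
    simpa only [card_univ, Fintype.card_fin] using
      sum_mul_le_sum_mul_add_card_of_sum_floor_mul_le
        (fun i _ => mul_nonneg (by positivity) (sub_nonneg.2 (ha i)))
        (fun _ _ => loss01_nonneg _ _) (fun _ _ => loss01_le_one _ _)
        (fun _ _ => loss01_nonneg _ _) (sum_floor_mul_loss01_le_of_flipWeight_le hg hg' hle)
  have loss_sum_le : ∑ i, (1 - a i) * loss01 (g (x i)) (h (x i)) ≤
      ∑ i, (1 - a i) * loss01 (g' (x i)) (h (x i)) + 1 / 3 := by
    simp only [mul_assoc (3 * (n : ℝ)), ← mul_sum] at weighted_le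
    refine le_of_mul_le_mul_left ?_ (by positivity : (0 : ℝ) < 3 * n)
    linarith
  calc selLossFrac01 c x g h a
      = 1 / n * (∑ i, c * a i + ∑ i, (1 - a i) * loss01 (g (x i)) (h (x i))) := by
        rw [selLossFrac01, sum_add_distrib]
    _ ≤ 1 / n * (∑ i, c * a i + (∑ i, (1 - a i) * loss01 (g' (x i)) (h (x i)) + 1 / 3)) := by
        gcongr
    _ = selLossFrac01 c x g' h a + 1 / (3 * n) := by
        rw [selLossFrac01, sum_add_distrib]; ring

end

theorem stmt_12_general {X : Type*} {F : Set (X → Bool)} {c : ℝ} (hc : 0 ≤ c)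
    {n : ℕ} (hn : 0 < n) {h : X → Bool} (hhF : h ∈ F) {xb x : Fin n → X} {a : Fin n → ℝ}
    (ha01 : ∀ i, a i ∈ Set.Icc (0 : ℝ) 1) {ghat : X → Bool} (hghatF : ghat ∈ F)
    (hmin : ∀ g ∈ F,
      flipWeight xb (fun i => h (xb i)) x h a ghat ≤
        flipWeight xb (fun i => h (xb i)) x h a g) :
    ghat ∈ VS F xb (fun i => h (xb i)) ∧
      worstSelLossFrac01 c x (VS F xb fun i => h (xb i)) h a - 1 / (3 * n) ≤
        selLossFrac01 c x ghat h a := by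
  have hVS : ghat ∈ VS F xb (fun i => h (xb i)) :=
    mem_VS_of_flipWeight_le (fun i => (ha01 i).1) ⟨hhF, fun _ => rfl⟩ hghatF (hmin h hhF)
  refine ⟨hVS, sub_le_iff_le_add.2 (worstSelLossFrac01_le ?_ fun g hg => ?_)⟩
  · exact add_nonneg (selLossFrac01_nonneg hc ha01) (by positivity)
  · exact selLossFrac01_le_of_flipWeight_le hn (fun i => (ha01 i).2) hg.2 hVS.2 (hmin g hg.1)

theorem stmt_12 {X : Type*} [Countable X]
    (F : Set (X → Bool)) (c : ℝ) (hc : c ∈ Set.Ioc (0 : ℝ) 1)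
    {n : ℕ} (hn : 0 < n)
    (h : X → Bool) (hhF : h ∈ F)
    (xb : Fin n → X) (x : Fin n → X) (a : Fin n → ℝ)
    (ha01 : ∀ i, a i ∈ Set.Icc (0 : ℝ) 1)
    (ghat : X → Bool) (hghatF : ghat ∈ F)
    (hmin : ∀ g ∈ F,
      flipWeight xb (fun i => h (xb i)) x h a ghat ≤
        flipWeight xb (fun i => h (xb i)) x h a g) :
    ghat ∈ VS F xb (fun i => h (xb i)) ∧
      worstSelLossFrac01 c x (VS F xb fun i => h (xb i)) h a - 1 / (3 * n) ≤
        selLossFrac01 c x ghat h a :=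
  stmt_12_general hc.1.le hn hhF ha01 hghatF hmin
end

section
/- Let Y = [−1, 1], let F be a convex class of functions X → Y (i.e., αf + (1−α)g ∈ F for all f, g ∈ F and α ∈ [0,1]), let (x̄_1, y_1), …, (x̄_n, y_n) ∈ X × Y, and let h ∈ F minimize the empirical squared loss g ↦ (1/n)·Σ_i (y_i − g(x̄_i))² over F. Then for every f ∈ F: (1/n)·Σ_{i=1}^n (f(x̄_i) − h(x̄_i))² ≤ (1/n)·Σ_{i=1}^n (y_i − f(x̄_i))² − (1/n)·Σ_{i=1}^n (y_i − h(x̄_i))². -/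
open Finset

/-!
Moving from the minimizer `v` a fraction `t` of the way towards `w` cannot decrease the loss
`Q (u - ·)`. Expanding `Q` along this segment and taking `t` small enough shows that the cross
term between `u - v` and `w - v` is nonpositive; the expansion at `t = 1` then gives the
inequality. The empirical squared loss is such a loss, for the quadratic form `∑ i, c i * z i ^ 2`
on vectors of values at the sample points.
-/

theorem quadraticForm_sub_smul {R M : Type*} [CommRing R] [AddCommGroup M] [Module R M]
    (Q : QuadraticForm R M) (a b : M) (t : R) :
    Q (a - t • b) = Q a - t * QuadraticMap.polar Q a b + t ^ 2 * Q b := by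
  rw [sub_eq_add_neg, ← neg_smul, QuadraticMap.map_add Q, QuadraticMap.map_smul,
    QuadraticMap.polar_smul_right, smul_eq_mul, smul_eq_mul]
  ring

theorem starConvex_of_forall_smul_add_one_sub_smul_mem {R M : Type*} [Ring R] [PartialOrder R]
    [IsOrderedAddMonoid R] [AddCommMonoid M] [Module R M] {s : Set M} {v : M}
    (hs : ∀ w ∈ s, ∀ t ∈ Set.Icc (0 : R) 1, t • v + (1 - t) • w ∈ s) : StarConvex R v s := by
  intro w hw a b ha hb hab
  obtain rfl : b = 1 - a := eq_sub_of_add_eq' hab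
  exact hs w hw a ⟨ha, sub_nonneg.1 hb⟩

section OrderedField

variable {𝕜 : Type*} [Field 𝕜] [LinearOrder 𝕜] [IsStrictOrderedRing 𝕜]

theorem nonpos_of_forall_le_mul {p d : 𝕜} (hpd : ∀ t, 0 < t → t ≤ 1 → p ≤ t * d) : p ≤ 0 := by
  by_contra! hp
  have hle : p ≤ d := by simpa only [one_mul] using hpd 1 one_pos le_rfl
  have hd : 0 < d := hp.trans_le hle
  have hhalf : p ≤ p / (2 * d) * d :=
    hpd _ (by positivity) ((div_le_one (by positivity)).2 (by linarith))
  have hcancel : p / (2 * d) * d = p / 2 := by field_simp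
  linarith

section QuadraticForm

variable {M : Type*} [AddCommGroup M] [Module 𝕜 M] {Q : QuadraticForm 𝕜 M} {s : Set M} {u v w : M}

theorem polar_sub_sub_nonpos_of_isMinOn (hs : StarConvex 𝕜 v s)
    (hv : IsMinOn (fun z => Q (u - z)) s v) (hw : w ∈ s) :
    QuadraticMap.polar Q (u - v) (w - v) ≤ 0 := by
  refine nonpos_of_forall_le_mul (d := Q (w - v)) fun t ht ht1 => ?_
  have hmem : v + t • (w - v) ∈ s := hs.add_smul_sub_mem hw ht.le ht1
  have hle : Q (u - v) ≤ Q (u - v - t • (w - v)) := by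
    simpa only [sub_sub] using isMinOn_iff.1 hv _ hmem
  rw [quadraticForm_sub_smul] at hle
  refine le_of_mul_le_mul_left ?_ ht
  linarith

theorem quadraticForm_sub_le_of_isMinOn (hs : StarConvex 𝕜 v s)
    (hv : IsMinOn (fun z => Q (u - z)) s v) (hw : w ∈ s) :
    Q (w - v) ≤ Q (u - w) - Q (u - v) := by
  have hexpand := quadraticForm_sub_smul Q (u - v) (w - v) 1
  rw [one_smul, sub_sub_sub_cancel_right] at hexpand
  linarith [polar_sub_sub_nonpos_of_isMinOn hs hv hw]

end QuadraticForm

theorem stmt_13_general {X ι : Type*} [Fintype ι] {F : Set (X → 𝕜)} {f h : X → 𝕜}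
    (hF : StarConvex 𝕜 h F) (x : ι → X) (c y : ι → 𝕜)
    (hmin : IsMinOn (fun g : X → 𝕜 => ∑ i, c i * (y i - g (x i)) ^ 2) F h) (hf : f ∈ F) :
    ∑ i, c i * (f (x i) - h (x i)) ^ 2 ≤
      ∑ i, c i * (y i - f (x i)) ^ 2 - ∑ i, c i * (y i - h (x i)) ^ 2 := by
  let Q : QuadraticForm 𝕜 (ι → 𝕜) := QuadraticMap.weightedSumSquares 𝕜 c
  let sample : (X → 𝕜) →ₗ[𝕜] (ι → 𝕜) := LinearMap.funLeft 𝕜 𝕜 x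
  have hQ (z : ι → 𝕜) : Q z = ∑ i, c i * z i ^ 2 := by
    simp only [Q, QuadraticMap.weightedSumSquares_apply, smul_eq_mul, sq]
  have hmin' : IsMinOn (fun z => Q (y - z)) (sample '' F) (sample h) := by
    rw [isMinOn_iff, Set.forall_mem_image]
    intro g hg
    simpa only [hQ, sample, Pi.sub_apply, LinearMap.funLeft_apply] using isMinOn_iff.1 hmin g hg
  simpa only [hQ, sample, Pi.sub_apply, LinearMap.funLeft_apply] using
    quadraticForm_sub_le_of_isMinOn (hF.linear_image sample) hmin' (Set.mem_image_of_mem sample hf)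

end OrderedField

theorem stmt_13 {X : Type*}
    (F : Set (X → ℝ))
    (hFrange : ∀ g ∈ F, ∀ t : X, g t ∈ Set.Icc (-1 : ℝ) 1)
    (hFconvex : ∀ f ∈ F, ∀ g ∈ F, ∀ α ∈ Set.Icc (0 : ℝ) 1,
      (fun t => α * f t + (1 - α) * g t) ∈ F)
    {n : ℕ} (hn : 0 < n)
    (xb : Fin n → X) (y : Fin n → ℝ) (hy : ∀ i, y i ∈ Set.Icc (-1 : ℝ) 1)
    (h : X → ℝ) (hhF : h ∈ F)
    (hERM : ∀ g ∈ F,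
      (1 / (n : ℝ)) * ∑ i, (y i - h (xb i)) ^ 2 ≤
        (1 / (n : ℝ)) * ∑ i, (y i - g (xb i)) ^ 2)
    (f : X → ℝ) (hfF : f ∈ F) :
    (1 / (n : ℝ)) * ∑ i, (f (xb i) - h (xb i)) ^ 2 ≤
      (1 / (n : ℝ)) * ∑ i, (y i - f (xb i)) ^ 2 -
        (1 / (n : ℝ)) * ∑ i, (y i - h (xb i)) ^ 2 := by
  simp only [mul_sum] at hERM ⊢
  exact stmt_13_general
    (starConvex_of_forall_smul_add_one_sub_smul_mem (hFconvex h hhF)) xb _ y hERM hfF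
end
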